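/- arXiv:0902.3860 — 2 statements merged into one kernel-verified Lean document; each statement's English description precedes it below -/
import Mathlib

section
/- Let Γ be a Shilla distance-regular graph with b = b(Γ) that is Q-polynomial with respect to θ₁ = a₃. Then θ₃ = -b - b(b-1)b₂/(b₂+c₂); in particular all eigenvalues of Γ are integral, b₂ + c₂ divides b(b-1)b₂, and -b² + 1 ≤ θ₃ ≤ -b²(b+3)/(3b+1). -/
open Finset SimpleGraph

/-- `G` is a distance-regular graph with diameter `D` and intersection numbers
`b i`, `c i`, `a i` (so valency `k = b 0` and `a i = k - b i - c i`). -/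
structure IsDRG {V : Type*} [Fintype V] (G : SimpleGraph V) (D : ℕ)
    (b c a : ℕ → ℕ) : Prop where
  connected : G.Connected
  le_diam : ∀ x y : V, G.dist x y ≤ D
  exists_diam : ∃ x y : V, G.dist x y = D
  card_b : ∀ i, i ≤ D → ∀ x y : V, G.dist x y = i →
      Nat.card {z : V | G.Adj y z ∧ G.dist x z = i + 1} = b i
  card_c : ∀ i, i ≤ D → ∀ x y : V, G.dist x y = i →
      Nat.card {z : V | G.Adj y z ∧ G.dist x z = i - 1} = c i
  card_a : ∀ i, i ≤ D → ∀ x y : V, G.dist x y = i →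
      Nat.card {z : V | G.Adj y z ∧ G.dist x z = i} = a i

/-- `θ` is an eigenvalue of the adjacency matrix of `G`. -/
def IsEig {V : Type*} [Fintype V] [DecidableEq V] (G : SimpleGraph V)
    [DecidableRel G.Adj] (θ : ℝ) : Prop :=
  ∃ v : V → ℝ, v ≠ 0 ∧ (G.adjMatrix ℝ).mulVec v = θ • v

/-- `θ` is the second largest eigenvalue of `G` (`k` being the largest). -/
def IsSecondLargestEig {V : Type*} [Fintype V] [DecidableEq V] (G : SimpleGraph V)
    [DecidableRel G.Adj] (k θ : ℝ) : Prop :=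
  IsEig G θ ∧ θ < k ∧ ∀ η : ℝ, IsEig G η → η ≠ k → η ≤ θ

/-- `θ` is the smallest eigenvalue of `G`. -/
def IsSmallestEig {V : Type*} [Fintype V] [DecidableEq V] (G : SimpleGraph V)
    [DecidableRel G.Adj] (θ : ℝ) : Prop :=
  IsEig G θ ∧ ∀ η : ℝ, IsEig G η → θ ≤ η

/-- The multiplicity of `θ` as an eigenvalue of the adjacency matrix of `G`. -/
noncomputable def eigMult {V : Type*} [Fintype V] [DecidableEq V] (G : SimpleGraph V)
    [DecidableRel G.Adj] (θ : ℝ) : ℕ :=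
  Module.finrank ℝ ↥(Module.End.eigenspace (Matrix.toLin' (G.adjMatrix ℝ)) θ)

/-- A Shilla distance-regular graph: diameter `3` and second largest eigenvalue `a 3`. -/
structure IsShilla {V : Type*} [Fintype V] [DecidableEq V] (G : SimpleGraph V)
    [DecidableRel G.Adj] (b c a : ℕ → ℕ) : Prop where
  drg : IsDRG G 3 b c a
  second : IsSecondLargestEig G (b 0) ((a 3 : ℝ))

/-- The standard sequence `u₀, u₁, u₂, u₃` associated to the eigenvalue `θ` of a
distance-regular graph of diameter `3` with intersection numbers `b, c, a`. -/
noncomputable def stdSeq (b c a : ℕ → ℕ) (θ : ℝ) : ℕ → ℝ := fun l =>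
  match l with
  | 0 => 1
  | 1 => θ / b 0
  | 2 => ((θ - a 1) * (θ / b 0) - c 1) / b 1
  | 3 => ((θ - a 2) * (((θ - a 1) * (θ / b 0) - c 1) / b 1) - c 2 * (θ / b 0)) / b 2
  | _ => 0

/-- The number `k_l` of vertices at distance `l` from a fixed vertex, for a
distance-regular graph of diameter `3`. -/
noncomputable def kdist (b c : ℕ → ℕ) : ℕ → ℝ := fun l =>
  match l with
  | 0 => 1
  | 1 => b 0
  | 2 => b 0 * b 1 / c 2
  | 3 => b 0 * b 1 * b 2 / (c 2 * c 3)
  | _ => 0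

/-- The Krein parameter `q^i_{11}` of a distance-regular graph of diameter `3` with `n`
vertices, where `m1` is the multiplicity of `θ1` and `θi` is the `i`-th eigenvalue:
`q^i_{11} = (m1 * m1 / n) * Σ_l k_l u_l(θ1)^2 u_l(θi)`. -/
noncomputable def krein11 (n m1 : ℕ) (b c a : ℕ → ℕ) (θ1 θi : ℝ) : ℝ :=
  ((m1 : ℝ) * m1 / n) *
    ∑ l ∈ Finset.range 4, kdist b c l * (stdSeq b c a θ1 l) ^ 2 * stdSeq b c a θi l

/-- For a distance-regular graph of diameter `3` with eigenvalues
`k > θ1 > θ2 > θ3`, being `Q`-polynomial with respect to `θ1` is equivalent to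
`q²₁₁ = 0` or `q³₁₁ = 0`. -/
def IsQPolyTheta1 (n m1 : ℕ) (b c a : ℕ → ℕ) (θ1 θ2 θ3 : ℝ) : Prop :=
  krein11 n m1 b c a θ1 θ2 = 0 ∨ krein11 n m1 b c a θ1 θ3 = 0

namespace IsDRG

variable {V : Type*} [Fintype V] {G : SimpleGraph V} {D : ℕ} {b c a : ℕ → ℕ}

theorem a_zero (h : IsDRG G D b c a) : a 0 = 0 := by
  obtain ⟨x, -, -⟩ := h.exists_diam
  rw [← h.card_a 0 (Nat.zero_le _) x x (by simp), Nat.card_eq_zero]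
  refine Or.inl ⟨fun z => ?_⟩
  obtain ⟨z, hz, hd⟩ := z
  rw [h.connected.dist_eq_zero_iff] at hd
  exact hz.ne hd

theorem c_zero (h : IsDRG G D b c a) : c 0 = 0 := by
  obtain ⟨x, -, -⟩ := h.exists_diam
  rw [← h.card_c 0 (Nat.zero_le _) x x (by simp)]
  exact (h.card_a 0 (Nat.zero_le _) x x (by simp)).trans h.a_zero

theorem b_diam (h : IsDRG G D b c a) : b D = 0 := by
  obtain ⟨x, y, hxy⟩ := h.exists_diam
  rw [← h.card_b D le_rfl x y hxy, Nat.card_eq_zero]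
  refine Or.inl ⟨fun z => ?_⟩
  obtain ⟨z, hz, hd⟩ := z
  have := h.le_diam x z
  omega

theorem b_pos (h : IsDRG G D b c a) {i : ℕ} (hi : i ≤ D) {x y z : V} (hxy : G.dist x y = i)
    (hyz : G.Adj y z) (hxz : G.dist x z = i + 1) : 0 < b i := by
  rw [← h.card_b i hi x y hxy]
  exact Nat.card_pos_iff.2 ⟨⟨⟨z, hyz, hxz⟩⟩, inferInstance⟩

theorem c_pos (h : IsDRG G D b c a) {i : ℕ} (hi : i ≤ D) {x y z : V} (hxy : G.dist x y = i)
    (hyz : G.Adj y z) (hxz : G.dist x z = i - 1) : 0 < c i := by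
  rw [← h.card_c i hi x y hxy]
  exact Nat.card_pos_iff.2 ⟨⟨⟨z, hyz, hxz⟩⟩, inferInstance⟩

theorem c_one (h : IsDRG G D b c a) {x y : V} (hxy : G.Adj x y) (hD : 1 ≤ D) : c 1 = 1 := by
  rw [← h.card_c 1 hD x y (dist_eq_one_iff_adj.2 hxy), Nat.card_eq_one_iff_unique]
  refine ⟨⟨fun u w => Subtype.ext ?_⟩, ⟨⟨x, hxy.symm, by simp⟩⟩⟩
  have hu := u.2.2
  have hw := w.2.2
  simp only [Nat.sub_self, h.connected.dist_eq_zero_iff] at hu hw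
  exact hu.symm.trans hw

/-- A geodesic of length three. -/
theorem exists_geodesic (h : IsDRG G 3 b c a) :
    ∃ x u w y : V, G.Adj x u ∧ G.Adj u w ∧ G.Adj w y ∧
      G.dist x u = 1 ∧ G.dist x w = 2 ∧ G.dist x y = 3 := by
  obtain ⟨x, y, hxy⟩ := h.exists_diam
  obtain ⟨p, hp⟩ := h.connected.exists_walk_length_eq_dist x y
  rw [hxy] at hp
  match p, hp with
  | .cons (v := u) h1 (.cons (v := w) h2 (.cons h3 .nil)), _ =>
    have e1 := dist_eq_one_iff_adj.2 h1
    have e2 := dist_eq_one_iff_adj.2 h2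
    have e3 := dist_eq_one_iff_adj.2 h3
    have t1 := h.connected.dist_triangle (u := x) (v := u) (w := w)
    have t2 := h.connected.dist_triangle (u := x) (v := w) (w := y)
    exact ⟨x, u, w, y, h1, h2, h3, e1, by omega, hxy⟩

variable [DecidableRel G.Adj]

/-- The sum over the neighbours of `y` of a function of the distance to `x`. -/
theorem sum_neighbor_dist (h : IsDRG G D b c a) (f : ℕ → ℝ) (x y : V) :
    ∑ z ∈ G.neighborFinset y, f (G.dist x z) =
      b (G.dist x y) * f (G.dist x y + 1) + a (G.dist x y) * f (G.dist x y)
        + c (G.dist x y) * f (G.dist x y - 1) := by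
  have hD := h.le_diam x y
  obtain ⟨i, hi⟩ : ∃ i, G.dist x y = i := ⟨_, rfl⟩
  have key (P : ℕ → Prop) [DecidablePred P] :
      (Nat.card {z : V | G.Adj y z ∧ P (G.dist x z)} : ℝ) =
        ∑ z ∈ G.neighborFinset y, if P (G.dist x z) then (1 : ℝ) else 0 := by
    rw [Finset.sum_boole, Nat.card_eq_fintype_card, Fintype.card_subtype]
    congr 2
    ext z
    simp
  rw [hi] at hD ⊢
  have hb : (b i : ℝ) = _ :=
    (congrArg Nat.cast (h.card_b i hD x y hi).symm).trans (key (· = i + 1))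
  have hc : (c i : ℝ) = _ :=
    (congrArg Nat.cast (h.card_c i hD x y hi).symm).trans (key (· = i - 1))
  have ha : (a i : ℝ) = _ :=
    (congrArg Nat.cast (h.card_a i hD x y hi).symm).trans (key (· = i))
  have hadj : ∀ z ∈ G.neighborFinset y,
      G.dist x z ≤ i + 1 ∧ i ≤ G.dist x z + 1 := by
    intro z hz
    rw [mem_neighborFinset] at hz
    have e1 := dist_eq_one_iff_adj.2 hz
    have e2 := dist_eq_one_iff_adj.2 hz.symm
    have t1 := h.connected.dist_triangle (u := x) (v := y) (w := z)
    have t2 := h.connected.dist_triangle (u := x) (v := z) (w := y)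
    omega
  rcases Nat.eq_zero_or_pos i with rfl | hpos
  · rw [h.a_zero, h.c_zero, hb, Finset.sum_mul]
    simp only [Nat.cast_zero, zero_mul, add_zero]
    refine Finset.sum_congr rfl fun z hz => ?_
    rw [h.connected.dist_eq_zero_iff] at hi
    subst hi
    rw [mem_neighborFinset] at hz
    simp [dist_eq_one_iff_adj.2 hz]
  · rw [hb, hc, ha, Finset.sum_mul, Finset.sum_mul, Finset.sum_mul, ← Finset.sum_add_distrib,
      ← Finset.sum_add_distrib]
    refine Finset.sum_congr rfl fun z hz => ?_
    obtain ⟨h1, h2⟩ := hadj z hz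
    have : G.dist x z = i + 1 ∨ G.dist x z = i ∨ G.dist x z = i - 1 := by omega
    rcases this with e | e | e <;> rw [e]
    · rw [if_pos rfl, if_neg (by omega), if_neg (by omega)]; ring
    · rw [if_neg (by omega), if_pos rfl, if_neg (by omega)]; ring
    · rw [if_neg (by omega), if_neg (by omega), if_pos rfl]; ring

/-- The valency is `b 0`, and `k = b i + a i + c i`. -/
theorem sum_eq_valency (h : IsDRG G D b c a) {i : ℕ} {x y : V} (hi : G.dist x y = i) :
    (b i : ℝ) + a i + c i = b 0 := by
  have h1 := h.sum_neighbor_dist (fun _ => 1) x y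
  have h2 := h.sum_neighbor_dist (fun _ => 1) y y
  rw [hi] at h1
  rw [dist_self, h.a_zero, h.c_zero] at h2
  simp only [mul_one, Nat.cast_zero, add_zero] at h1 h2
  rw [← h1, h2]

/-- Summing an eigenvector against a function of the distance to `x`. -/
theorem eig_sum_dist (h : IsDRG G D b c a) {θ : ℝ} {v : V → ℝ}
    (hv : (G.adjMatrix ℝ).mulVec v = θ • v) (f : ℕ → ℝ) (x : V) :
    θ * ∑ w, f (G.dist x w) * v w =
      ∑ w, (b (G.dist x w) * f (G.dist x w + 1) + a (G.dist x w) * f (G.dist x w)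
        + c (G.dist x w) * f (G.dist x w - 1)) * v w := by
  have hv' : ∀ w, θ * v w = ∑ y ∈ G.neighborFinset w, v y := fun w => by
    have := congrFun hv w
    rw [adjMatrix_mulVec_apply] at this
    simpa using this.symm
  calc θ * ∑ w, f (G.dist x w) * v w
      = ∑ w, ∑ y ∈ G.neighborFinset w, f (G.dist x w) * v y := by
        rw [Finset.mul_sum]
        refine Finset.sum_congr rfl fun w _ => ?_
        rw [← Finset.mul_sum, ← hv' w]; ring
    _ = ∑ y, ∑ w ∈ G.neighborFinset y, f (G.dist x w) * v y := by
        refine Finset.sum_comm' fun w y => ?_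
        simp [adj_comm]
    _ = _ := by
        refine Finset.sum_congr rfl fun y _ => ?_
        rw [← Finset.sum_mul, h.sum_neighbor_dist f x y]

/-- The recurrence for the sums of an eigenvector over the spheres around a vertex. -/
theorem sphere_sum_recurrence (h : IsDRG G 3 b c a) {θ : ℝ} {v : V → ℝ}
    (hv : (G.adjMatrix ℝ).mulVec v = θ • v) (x : V) :
    ∃ g : ℕ → ℝ, (∀ j, g j = ∑ w, (if G.dist x w = j then 1 else 0) * v w) ∧ g 0 = v x ∧
      θ * g 0 = c 1 * g 1 ∧ θ * g 1 = b 0 * g 0 + a 1 * g 1 + c 2 * g 2 ∧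
      θ * g 2 = b 1 * g 1 + a 2 * g 2 + c 3 * g 3 ∧ θ * g 3 = b 2 * g 2 + a 3 * g 3 := by
  refine ⟨fun j => ∑ w, (if G.dist x w = j then 1 else 0) * v w, fun _ => rfl, ?_, ?_, ?_, ?_, ?_⟩
  · classical simp [h.connected.dist_eq_zero_iff]
  all_goals
    beta_reduce
    rw [h.eig_sum_dist hv (fun i => if i = _ then 1 else 0) x]
    simp only [Finset.mul_sum, ← Finset.sum_add_distrib]
    refine Finset.sum_congr rfl fun w _ => ?_
    have := h.le_diam x w
    generalize G.dist x w = i at this ⊢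
    interval_cases i <;> simp [h.a_zero, h.c_zero, h.b_diam]

/-- The cosine function of an eigenvalue is an eigenvector. -/
theorem eig_of_cosine (h : IsDRG G 3 b c a) {θ : ℝ} (u : ℕ → ℝ)
    (h0 : b 0 * u 1 = θ * u 0)
    (h1 : b 1 * u 2 + a 1 * u 1 + c 1 * u 0 = θ * u 1)
    (h2 : b 2 * u 3 + a 2 * u 2 + c 2 * u 1 = θ * u 2)
    (h3 : a 3 * u 3 + c 3 * u 2 = θ * u 3) (x : V) :
    (G.adjMatrix ℝ).mulVec (fun w => u (G.dist x w)) = θ • fun w => u (G.dist x w) := by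
  funext y
  rw [adjMatrix_mulVec_apply, h.sum_neighbor_dist u x y]
  have := h.le_diam x y
  simp only [Pi.smul_apply, smul_eq_mul]
  generalize G.dist x y = i at this ⊢
  interval_cases i
  · simpa [h.a_zero, h.c_zero] using h0
  · simpa using h1
  · simpa using h2
  · simpa [h.b_diam] using h3

end IsDRG

theorem eigMult_pos {V : Type*} [Fintype V] [DecidableEq V] {G : SimpleGraph V}
    [DecidableRel G.Adj] {θ : ℝ} (h : IsEig G θ) : 0 < eigMult G θ := by
  obtain ⟨v, hv0, hv⟩ := h
  unfold eigMult
  have hmem : v ∈ Module.End.eigenspace (Matrix.toLin' (G.adjMatrix ℝ)) θ := by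
    rw [Module.End.mem_eigenspace_iff, Matrix.toLin'_apply, hv]
  have : Nontrivial (Module.End.eigenspace (Matrix.toLin' (G.adjMatrix ℝ)) θ) :=
    ⟨⟨v, hmem⟩, 0, fun e => hv0 (congrArg Subtype.val e)⟩
  exact Module.finrank_pos

namespace IsShilla

variable {V : Type*} [Fintype V] [DecidableEq V] {G : SimpleGraph V} [DecidableRel G.Adj]
  {b c a : ℕ → ℕ}

/-- The basic parameters of a Shilla graph with `β = a 3 - a 1`. -/
theorem parameters (hG : IsShilla G b c a) {β : ℕ} (hβ : a 3 = a 1 + β) :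
    0 < b 2 ∧ 0 < c 2 ∧ c 1 = 1 ∧ 0 < a 3 ∧ (b 0 : ℝ) = β * a 3 ∧
      (c 3 : ℝ) = (β - 1) * a 3 ∧ (b 1 : ℝ) = (β - 1) * (a 3 + 1) ∧
      (a 2 : ℝ) = β * a 3 - b 2 - c 2 := by
  have h := hG.drg
  obtain ⟨x, u, w, y, h1, h2, h3, e1, e2, e3⟩ := h.exists_geodesic
  have hb2 : 0 < b 2 := h.b_pos (by norm_num) e2 h3 e3
  have hc2 : 0 < c 2 := h.c_pos (by norm_num) e2 h2.symm e1
  have hc1 : c 1 = 1 := h.c_one h1 (by norm_num)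
  have k1 := h.sum_eq_valency e1
  have k2 := h.sum_eq_valency e2
  have k3 := h.sum_eq_valency e3
  rw [h.b_diam] at k3
  rw [hc1] at k1
  push_cast at k1 k3
  obtain ⟨⟨v, hv0, hv⟩, hlt, -⟩ := hG.second
  obtain ⟨x₀, hx₀⟩ := Function.ne_iff.1 hv0
  obtain ⟨g, -, hg0, r0, r1, -, r3⟩ := h.sphere_sum_recurrence hv x₀
  have hg : g 0 ≠ 0 := hg0 ▸ hx₀
  have hb2' : (b 2 : ℝ) ≠ 0 := by positivity
  have hg2 : g 2 = 0 := by
    have : (b 2 : ℝ) * g 2 = 0 := by linarith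
    simpa [hb2'] using this
  have hβ' : (a 3 : ℝ) = a 1 + β := by exact_mod_cast hβ
  have hk : (b 0 : ℝ) = β * a 3 := by
    rw [hc1, Nat.cast_one, one_mul] at r0
    rw [hg2, ← r0] at r1
    apply mul_right_cancel₀ hg
    have : (β : ℝ) = a 3 - a 1 := by linarith
    rw [this]
    linarith
  have ha3 : 0 < a 3 := by
    rcases Nat.eq_zero_or_pos (a 3) with e | e
    · rw [hk, e] at hlt; simp at hlt
    · exact e
  refine ⟨hb2, hc2, hc1, ha3, hk, ?_, ?_, ?_⟩ <;> linarith

/-- The quadratic satisfied by the eigenvalues other than `k` and `a 3`. -/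
theorem eig_quadratic (hG : IsShilla G b c a) {β : ℕ} (hβ : a 3 = a 1 + β) {θ : ℝ}
    (hθ : IsEig G θ) (hk : θ ≠ b 0) (ha : θ ≠ a 3) :
    θ ^ 2 - (a 2 + a 3 - β - β * a 3) * θ + ((β - 1) * b 2 - a 2) = 0 := by
  obtain ⟨hb2, hc2, hc1, ha3, hb0, hc3, hb1, ha2⟩ := hG.parameters hβ
  obtain ⟨v, hv0, hv⟩ := hθ
  obtain ⟨x, hx⟩ := Function.ne_iff.1 hv0
  obtain ⟨g, -, hg0, r0, r1, r2, r3⟩ := hG.drg.sphere_sum_recurrence hv x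
  have hg : g 0 ≠ 0 := hg0 ▸ hx
  have hβ' : (a 1 : ℝ) = a 3 - β := by
    have : (a 3 : ℝ) = a 1 + β := by exact_mod_cast hβ
    linarith
  rw [hc1, Nat.cast_one, one_mul] at r0
  rw [← r0] at r1 r2
  rw [hb0] at hk
  rw [hβ', hb0] at r1
  have s2 : c 2 * g 2 = (θ + β) * (θ - a 3) * g 0 := by linear_combination -r1
  have hprod : (θ - a 3) * ((θ - β * a 3) *
      ((θ ^ 2 - (a 2 + a 3 - β - β * a 3) * θ + ((β - 1) * b 2 - a 2)) * g 0)) = 0 := by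
    have r2' : (c 3 : ℝ) * (c 2 * g 3) = c 2 * ((θ - a 2) * g 2 - b 1 * (θ * g 0)) := by
      linear_combination -(c 2 : ℝ) * r2
    have r3' : (c 3 : ℝ) * (c 2 * ((θ - a 3) * g 3)) = c 3 * (b 2 * (c 2 * g 2)) := by
      linear_combination (c 3 : ℝ) * c 2 * r3
    have e : (θ - a 3) * (((θ - a 2) * ((θ + β) * (θ - a 3)) - c 2 * b 1 * θ
        - c 3 * b 2 * (θ + β)) * g 0) = 0 := by
      linear_combination (-(θ - a 3)) * r2' + r3' + (c 3 * b 2 - (θ - a 3) * (θ - a 2)) * s2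
    rw [hc3, hb1] at e
    have hc2' : (c 2 : ℝ) = β * a 3 - b 2 - a 2 := by linarith
    rw [hc2'] at e
    linear_combination e
  simpa [sub_ne_zero.2 ha, sub_ne_zero.2 hk, hg] using hprod

/-- `(1 + a₃) c₂ ≤ (b + a₃) b₂`, from the nonnegativity of `p³₃₃`. -/
theorem one_add_mul_c_two_le (hG : IsShilla G b c a) {β : ℕ} (hβ2 : 2 ≤ β)
    (hβ : a 3 = a 1 + β) : (1 + (a 3 : ℝ)) * c 2 ≤ (β + a 3) * b 2 := by
  obtain ⟨hb2, hc2, hc1, ha3, hb0, hc3, hb1, ha2⟩ := hG.parameters hβ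
  have h := hG.drg
  have hβ' : (a 1 : ℝ) = a 3 - β := by
    have : (a 3 : ℝ) = a 1 + β := by exact_mod_cast hβ
    linarith
  have hβ0 : (2 : ℝ) ≤ β := by exact_mod_cast hβ2
  have hb2' : (0 : ℝ) < b 2 := by exact_mod_cast hb2
  have hc2' : (0 : ℝ) < c 2 := by exact_mod_cast hc2
  have ha3' : (0 : ℝ) < a 3 := by exact_mod_cast ha3
  let u : ℕ → ℝ := fun i => match i with
    | 0 => β * b 2
    | 1 => b 2
    | 3 => -c 2
    | _ => 0
  obtain ⟨x, z, hxz⟩ := h.exists_diam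
  have hv := h.eig_of_cosine (θ := a 3) u
    (by simp only [u]; rw [hb0]; ring)
    (by simp only [u]; rw [hβ', hc1]; push_cast; ring)
    (by simp only [u]; ring) (by simp only [u]; ring) x
  obtain ⟨g, hg, hg0, r0, r1, r2, -⟩ := h.sphere_sum_recurrence hv z
  have hzx : G.dist z x = 3 := by rw [dist_comm, hxz]
  rw [hxz] at hg0
  simp only [u] at hg0
  have hg3 : g 3 = (a 3 + 1) * c 2 := by
    rw [hc1, Nat.cast_one, one_mul] at r0
    rw [← r0, hb0, hβ'] at r1
    have hg2 : g 2 = 0 := by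
      have : (c 2 : ℝ) * g 2 = 0 := by linear_combination -r1
      simpa [hc2'.ne'] using this
    rw [hg2, ← r0, hg0, hc3, hb1] at r2
    have hne : ((β : ℝ) - 1) * a 3 ≠ 0 := mul_ne_zero (by linarith) ha3'.ne'
    apply mul_left_cancel₀ hne
    linear_combination -r2
  have hcard : (∑ w, if G.Adj x w ∧ G.dist z w = 3 then (1 : ℝ) else 0) = a 3 := by
    rw [Finset.sum_boole, ← h.card_a 3 le_rfl z x hzx, Nat.card_eq_fintype_card,
      Fintype.card_subtype]
    rfl
  have hbound : g 3 ≤ ∑ w, ((if w = x then (β : ℝ) * b 2 else 0)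
      + b 2 * if G.Adj x w ∧ G.dist z w = 3 then (1 : ℝ) else 0) := by
    rw [hg]
    refine Finset.sum_le_sum fun w _ => ?_
    have hd := h.le_diam x w
    have hx0 : G.dist x w = 0 ↔ w = x := by rw [h.connected.dist_eq_zero_iff, eq_comm]
    have hx1 : G.dist x w = 1 ↔ G.Adj x w := dist_eq_one_iff_adj
    simp only [← hx0, ← hx1]
    have : 0 ≤ (β : ℝ) * b 2 := by positivity
    generalize G.dist x w = i at hd ⊢
    interval_cases i <;> by_cases hz : G.dist z w = 3 <;> simp [u, hz, this]
  rw [Finset.sum_add_distrib, ← Finset.mul_sum, hcard, hg3] at hbound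
  simp only [Finset.sum_ite_eq', Finset.mem_univ, if_true] at hbound
  linarith

/-- The vanishing of a Krein parameter `qⁱ₁₁` determines `θᵢ`. -/
theorem krein_eq_zero (hG : IsShilla G b c a) {β : ℕ} (hβ2 : 2 ≤ β) (hβ : a 3 = a 1 + β) {θ : ℝ}
    (hθ : IsEig G θ) (hk : θ ≠ b 0) (ha : θ ≠ a 3)
    (hq : krein11 (Fintype.card V) (eigMult G (a 3 : ℝ)) b c a (a 3) θ = 0) :
    θ * (b 2 + c 2) = -(β * (β * b 2 + c 2)) := by
  have hquad := hG.eig_quadratic hβ hθ hk ha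
  obtain ⟨hb2, hc2, hc1, ha3, hb0, hc3, hb1, ha2⟩ := hG.parameters hβ
  have hβ' : (a 1 : ℝ) = a 3 - β := by
    have : (a 3 : ℝ) = a 1 + β := by exact_mod_cast hβ
    linarith
  have hβ0 : (2 : ℝ) ≤ β := by exact_mod_cast hβ2
  have hb2' : (b 2 : ℝ) ≠ 0 := by positivity
  have hc2' : (c 2 : ℝ) ≠ 0 := by positivity
  have ha3' : (a 3 : ℝ) ≠ 0 := by positivity
  have ha3'' : (a 3 : ℝ) + 1 ≠ 0 := by positivity
  have hβ1 : (β : ℝ) - 1 ≠ 0 := by linarith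
  have hβn : (β : ℝ) ≠ 0 := by linarith
  obtain ⟨x, -, -⟩ := hG.drg.exists_diam
  have hn : (Fintype.card V : ℝ) ≠ 0 := by
    have : 0 < Fintype.card V := Fintype.card_pos_iff.2 ⟨x⟩
    positivity
  have hm : (eigMult G (a 3 : ℝ) : ℝ) ≠ 0 := by
    have := eigMult_pos hG.second.1
    positivity
  have w2 : stdSeq b c a (a 3) 2 = 0 := by
    simp only [stdSeq]
    rw [hβ', hb0, hc1]
    field_simp
    simp
  have w1 : stdSeq b c a (a 3) 1 = 1 / β := by
    simp only [stdSeq]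
    rw [hb0]
    field_simp
  have w3 : stdSeq b c a (a 3) 3 = -c 2 / (b 2 * β) := by
    have : stdSeq b c a (a 3) 3 =
      ((a 3 - a 2) * stdSeq b c a (a 3) 2 - c 2 * stdSeq b c a (a 3) 1) / b 2 := rfl
    rw [this, w2, w1]
    field_simp
    simp
  have v3 : stdSeq b c a θ 3 = (θ + β) / (β * (a 3 + 1)) := by
    simp only [stdSeq]
    rw [hβ', hb0, hb1, hc1]
    have hc2s : (c 2 : ℝ) = β * a 3 - b 2 - a 2 := by linarith
    field_simp
    rw [hc2s]
    push_cast
    linear_combination (θ - β * a 3) * hquad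
  rw [krein11] at hq
  have hsum := (mul_eq_zero.1 hq).resolve_left (div_ne_zero (mul_ne_zero hm hm) hn)
  simp only [Finset.sum_range_succ, Finset.sum_range_zero, w1, w2, w3, v3] at hsum
  simp only [kdist, stdSeq] at hsum
  rw [hb0, hb1, hc3] at hsum
  field_simp at hsum
  apply mul_left_cancel₀ hc2'
  linear_combination hsum

end IsShilla

/-- A rational root of a monic integral quadratic polynomial is an integer. -/
theorem exists_int_of_quadratic {θ : ℝ} {p q : ℤ} {r : ℚ} (hr : θ = r)
    (h : θ ^ 2 - p * θ + q = 0) : ∃ z : ℤ, θ = z := by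
  have hr' : r ^ 2 - p * r + q = 0 := by
    rw [hr] at h
    exact_mod_cast h
  have hint : IsIntegral ℤ r := by
    refine ⟨Polynomial.X ^ 2 - Polynomial.C p * Polynomial.X + Polynomial.C q, by monicity!, ?_⟩
    rw [Polynomial.eval₂_add, Polynomial.eval₂_sub, Polynomial.eval₂_mul,
      Polynomial.eval₂_X_pow, Polynomial.eval₂_X, Polynomial.eval₂_C, Polynomial.eval₂_C]
    simpa using hr'
  obtain ⟨z, hz⟩ := IsIntegrallyClosed.isIntegral_iff.1 hint
  refine ⟨z, ?_⟩
  rw [hr, ← hz]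
  simp

/-- For a Shilla distance-regular graph with `b = b(Γ)` that is `Q`-polynomial with
respect to `θ₁ = a₃`: `θ₃ = -b - b(b-1)b₂/(b₂+c₂)`; all eigenvalues are integral;
`b₂ + c₂ ∣ b(b-1)b₂`; and `-b² + 1 ≤ θ₃ ≤ -b²(b+3)/(3b+1)`. -/
theorem stmt16 {V : Type*} [Fintype V] [DecidableEq V] (G : SimpleGraph V)
    [DecidableRel G.Adj] (b c a : ℕ → ℕ) (hG : IsShilla G b c a)
    (β : ℕ) (hβ2 : 2 ≤ β) (hβ : a 3 = a 1 + β)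
    (θ2 θ3 : ℝ) (h2 : IsEig G θ2) (h3 : IsEig G θ3)
    (h32 : θ3 < θ2) (h2a : θ2 < (a 3 : ℝ))
    (hall : ∀ θ : ℝ, IsEig G θ → θ = (b 0 : ℝ) ∨ θ = (a 3 : ℝ) ∨ θ = θ2 ∨ θ = θ3)
    (n : ℕ) (hn : Fintype.card V = n) (m1 : ℕ) (hm1 : eigMult G ((a 3 : ℝ)) = m1)
    (hQ : IsQPolyTheta1 n m1 b c a ((a 3 : ℝ)) θ2 θ3) :
    θ3 = -(β : ℝ) - (β : ℝ) * ((β : ℝ) - 1) * b 2 / ((b 2 : ℝ) + c 2) ∧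
    (∀ θ : ℝ, IsEig G θ → ∃ z : ℤ, θ = (z : ℝ)) ∧
    (b 2 + c 2) ∣ β * (β - 1) * b 2 ∧
    -(β : ℝ) ^ 2 + 1 ≤ θ3 ∧ θ3 ≤ -((β : ℝ) ^ 2 * ((β : ℝ) + 3)) / (3 * (β : ℝ) + 1) := by
  subst hn hm1
  have hlt := hG.second.2.1
  obtain ⟨hb2, hc2, -, ha3, hb0, -, -, ha2⟩ := hG.parameters hβ
  have hβ0 : (2 : ℝ) ≤ β := by exact_mod_cast hβ2
  have hb2' : (0 : ℝ) < b 2 := by exact_mod_cast hb2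
  have hc2' : (0 : ℝ) < c 2 := by exact_mod_cast hc2
  have hs : (0 : ℝ) < (b 2 : ℝ) + c 2 := by positivity
  have q2 := hG.eig_quadratic hβ h2 (by linarith) (by linarith)
  have q3 := hG.eig_quadratic hβ h3 (by linarith) (by linarith)
  have hsum : θ2 + θ3 = a 2 + a 3 - β - β * a 3 := by
    apply mul_left_cancel₀ (sub_ne_zero.2 h32.ne')
    linear_combination q2 - q3
  have hβθ : (θ2 + β) * (θ3 + β) < 0 := by
    have e : (θ2 + β) * (θ3 + β) = -((β - 1) * c 2) := by
      have hc2s : (c 2 : ℝ) = β * a 3 - b 2 - a 2 := by linarith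
      rw [hc2s]
      linear_combination θ2 * hsum + β * hsum - q2
    rw [e]
    have : 0 < ((β : ℝ) - 1) * c 2 := mul_pos (by linarith) hc2'
    linarith
  have hkey : θ3 * (b 2 + c 2) = -(β * (β * b 2 + c 2)) := by
    rcases hQ with hq | hq
    · have hk := hG.krein_eq_zero hβ2 hβ h2 (by linarith) (by linarith) hq
      have hneg : (θ2 + β) * (b 2 + c 2) < 0 := by
        have : 0 < (β : ℝ) * (β - 1) * b 2 :=
          mul_pos (mul_pos (by linarith) (by linarith)) hb2'
        nlinarith
      have h2n : θ2 + β < 0 := by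
        by_contra! hcon
        exact absurd (mul_nonneg hcon hs.le) (not_le.2 hneg)
      have : 0 < (θ2 + β) * (θ3 + β) := mul_pos_of_neg_of_neg h2n (by linarith)
      linarith
    · exact hG.krein_eq_zero hβ2 hβ h3 (by linarith) (by linarith) hq
  have hθ3 : θ3 = -(β : ℝ) - (β : ℝ) * ((β : ℝ) - 1) * b 2 / ((b 2 : ℝ) + c 2) := by
    field_simp
    linear_combination hkey
  obtain ⟨z3, hz3⟩ : ∃ z : ℤ, θ3 = z := by
    refine exists_int_of_quadratic (p := a 2 + a 3 - β - β * a 3) (q := (β - 1) * b 2 - a 2)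
      (r := -(β : ℚ) - (β : ℚ) * ((β : ℚ) - 1) * b 2 / ((b 2 : ℚ) + c 2)) ?_ ?_
    · rw [hθ3]; push_cast; ring
    · push_cast; exact q3
  refine ⟨hθ3, ?_, ?_, ?_, ?_⟩
  · intro θ hθ
    rcases hall θ hθ with rfl | rfl | rfl | rfl
    · exact ⟨b 0, by simp⟩
    · exact ⟨a 3, by simp⟩
    · refine ⟨a 2 + a 3 - β - β * a 3 - z3, ?_⟩
      push_cast
      linarith
    · exact ⟨z3, hz3⟩
  · rw [← Int.natCast_dvd_natCast]
    refine ⟨-β - z3, ?_⟩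
    have : ((β * (β - 1) * b 2 : ℕ) : ℝ) = ((b 2 + c 2 : ℕ) : ℝ) * (-β - z3) := by
      rw [← hz3]
      push_cast [Nat.cast_sub (show 1 ≤ β by omega)]
      linear_combination hkey
    exact_mod_cast this
  · have hpos : -(β : ℝ) ^ 2 < θ3 := by
      have : 0 < (β : ℝ) * (β - 1) * c 2 :=
        mul_pos (mul_pos (by linarith) (by linarith)) hc2'
      by_contra! hcon
      nlinarith [mul_le_mul_of_nonneg_right hcon hs.le]
    rw [hz3] at hpos ⊢
    have : -(β : ℤ) ^ 2 < z3 := by exact_mod_cast hpos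
    have : -(β : ℤ) ^ 2 + 1 ≤ z3 := this
    exact_mod_cast this
  · have hle := hG.one_add_mul_c_two_le hβ2 hβ
    have haβ : (β : ℝ) ≤ a 3 := by exact_mod_cast (show β ≤ a 3 by omega)
    have hc : ((β : ℝ) + 1) * c 2 ≤ 2 * β * b 2 := by
      have h1 : (1 + (a 3 : ℝ)) * ((β + 1) * c 2) ≤ (1 + a 3) * (2 * β * b 2) := by
        have : 0 ≤ ((a 3 : ℝ) - β) * (β - 1) * b 2 :=
          mul_nonneg (mul_nonneg (by linarith) (by linarith)) hb2'.le
        nlinarith [mul_le_mul_of_nonneg_left hle (show (0 : ℝ) ≤ β + 1 by linarith)]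
      exact le_of_mul_le_mul_left h1 (by positivity)
    rw [le_div_iff₀ (by positivity)]
    apply le_of_mul_le_mul_right _ hs
    have : 0 ≤ (β : ℝ) * (β - 1) * (2 * β * b 2 - (β + 1) * c 2) :=
      mul_nonneg (mul_nonneg (by linarith) (by linarith)) (by linarith)
    have e : θ3 * (3 * β + 1) * (b 2 + c 2) = -(β * (β * b 2 + c 2)) * (3 * β + 1) := by
      rw [← hkey]; ring
    rw [e]
    linarith
end

section
/- Let Γ be a Shilla distance-regular graph with b(Γ) = 3 that is Q-polynomial with respect to θ₁. Then the intersection array of Γ is {42, 30, 12; 1, 6, 28} or {105, 72, 24; 1, 12, 70}. -/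
open Finset SimpleGraph

section Counting

variable {V : Type*} [Fintype V] {G : SimpleGraph V} {b c a : ℕ → ℕ}

/-- The number of neighbours at distance `i` from a base point of a vertex at distance `j`
from it. -/
def nbrCount (b c a : ℕ → ℕ) (j i : ℕ) : ℕ :=
  if i = j + 1 then b j else if i = j then a j else if i + 1 = j then c j else 0

theorem IsDRG.card_nbr [DecidableEq V] [DecidableRel G.Adj] (h : IsDRG G 3 b c a) (x y : V)
    (i : ℕ) :
    #{z | G.Adj y z ∧ G.dist x z = i} = nbrCount b c a (G.dist x y) i := by
  have key : Nat.card {z : V | G.Adj y z ∧ G.dist x z = i}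
      = #{z | G.Adj y z ∧ G.dist x z = i} := by
    rw [Set.coe_ofPred, Nat.subtype_card]
    simp
  have hle := h.le_diam x y
  unfold nbrCount
  split_ifs with h1 h2 h3
  · subst h1; rw [← key]; exact h.card_b _ hle x y rfl
  · subst h2; rw [← key]; exact h.card_a _ hle x y rfl
  · have := h.card_c _ hle x y rfl
    rw [← key, ← this, ← h3]; rfl
  · rw [Finset.card_eq_zero, Finset.filter_eq_empty_iff]
    rintro z - ⟨hz, hzi⟩
    have := hz.diff_dist_adj (u := x)
    omega

theorem IsDRG.exists_chain (h : IsDRG G 3 b c a) :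
    ∃ p : ℕ → V, (∀ i ≤ 3, G.dist (p 0) (p i) = i) ∧ ∀ i < 3, G.Adj (p i) (p (i + 1)) := by
  obtain ⟨x, y, hxy⟩ := h.exists_diam
  obtain ⟨w, hw⟩ := h.connected.exists_walk_length_eq_dist x y
  refine ⟨w.getVert, fun i hi => ?_, fun i hi => w.adj_getVert_succ (by omega)⟩
  have h1 : G.dist x (w.getVert i) ≤ i := (dist_le (w.take i)).trans (by simp)
  have h2 : G.dist (w.getVert i) y ≤ 3 - i := (dist_le (w.drop i)).trans (by simp; omega)
  have h3 := h.connected.dist_triangle (u := x) (v := w.getVert i) (w := y)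
  simp only [Walk.getVert_zero]
  omega

theorem IsDRG.degree_eq [DecidableEq V] [DecidableRel G.Adj] (h : IsDRG G 3 b c a) (x : V) :
    G.degree x = b 0 := by
  have := h.card_nbr x x 1
  rw [SimpleGraph.dist_self] at this
  rw [← card_neighborFinset_eq_degree, neighborFinset_eq_filter]
  simp only [nbrCount, zero_add, if_true] at this
  rw [← this]
  congr 1
  ext z
  simp only [Finset.mem_filter, Finset.mem_univ, true_and]
  exact ⟨fun hz => ⟨hz, dist_eq_one_iff_adj.2 hz⟩, fun hz => hz.1⟩

theorem IsDRG.b_pos_s17 (h : IsDRG G 3 b c a) {i : ℕ} (hi : i < 3) : 0 < b i := by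
  classical
  obtain ⟨p, hp, hadj⟩ := h.exists_chain
  have := h.card_nbr (p 0) (p i) (i + 1)
  rw [hp i hi.le] at this
  simp only [nbrCount, if_true] at this
  rw [← this, Finset.card_pos]
  exact ⟨p (i + 1), by simp [hadj i hi, hp (i + 1) hi]⟩

theorem IsDRG.c_pos_s17 (h : IsDRG G 3 b c a) {i : ℕ} (hi : i < 3) : 0 < c (i + 1) := by
  classical
  obtain ⟨p, hp, hadj⟩ := h.exists_chain
  have := h.card_nbr (p 0) (p (i + 1)) i
  rw [hp (i + 1) hi] at this
  have h2 : ¬ (i = i + 1 + 1) := by omega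
  simp only [nbrCount, if_true, h2, if_false, left_eq_add, one_ne_zero] at this
  rw [← this, Finset.card_pos]
  exact ⟨p i, by simp [(hadj i hi).symm, hp i hi.le]⟩

theorem IsDRG.b_three (h : IsDRG G 3 b c a) : b 3 = 0 := by
  classical
  obtain ⟨p, hp, -⟩ := h.exists_chain
  have := h.card_nbr (p 0) (p 3) 4
  rw [hp 3 le_rfl] at this
  simp only [nbrCount, Nat.reduceAdd, if_true] at this
  rw [← this, Finset.card_eq_zero, Finset.filter_eq_empty_iff]
  rintro z - ⟨-, hz⟩
  have := h.le_diam (p 0) z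
  omega

theorem IsDRG.c_one_s17 (h : IsDRG G 3 b c a) : c 1 = 1 := by
  classical
  obtain ⟨p, hp, hadj⟩ := h.exists_chain
  have := h.card_nbr (p 0) (p 1) 0
  rw [hp 1 (by norm_num)] at this
  simp only [nbrCount, zero_add, if_true, OfNat.zero_ne_ofNat, zero_ne_one, if_false,
    Nat.reduceAdd] at this
  rw [← this, Finset.card_eq_one]
  refine ⟨p 0, ?_⟩
  ext z
  simp only [Finset.mem_filter, Finset.mem_univ, true_and, Finset.mem_singleton,
    h.connected.dist_eq_zero_iff]
  refine ⟨fun hz => hz.2.symm, ?_⟩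
  rintro rfl
  exact ⟨(hadj 0 (by norm_num)).symm, rfl⟩

/-- Summing a function of the distance to `x` over the neighbours of `y`. -/
theorem IsDRG.sum_nbr [DecidableEq V] [DecidableRel G.Adj] (h : IsDRG G 3 b c a) (x y : V)
    (f : ℕ → ℝ) :
    ∑ z, (if G.Adj y z then f (G.dist x z) else 0)
      = ∑ i ∈ Finset.range 4, nbrCount b c a (G.dist x y) i * f i := by
  have : ∀ z, (if G.Adj y z then f (G.dist x z) else 0)
      = ∑ i ∈ Finset.range 4, if G.Adj y z ∧ G.dist x z = i then f i else 0 := by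
    intro z
    have hz : G.dist x z ∈ Finset.range 4 := by
      have := h.le_diam x z
      simp; omega
    by_cases hyz : G.Adj y z
    · simp only [hyz, true_and, if_true]
      rw [Finset.sum_ite_eq, if_pos hz]
    · simp [hyz]
  simp_rw [this]
  rw [Finset.sum_comm]
  refine Finset.sum_congr rfl fun i _ => ?_
  rw [← h.card_nbr, ← Finset.sum_filter, Finset.sum_const, nsmul_eq_mul]

theorem IsDRG.sum_params (h : IsDRG G 3 b c a) {j : ℕ} (hj : j < 3) :
    a (j + 1) + b (j + 1) + c (j + 1) = b 0 := by
  classical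
  obtain ⟨p, hp, hadj⟩ := h.exists_chain
  have := h.sum_nbr (p 0) (p (j + 1)) (fun _ => 1)
  rw [hp (j + 1) hj, ← Finset.sum_filter, Finset.sum_const, ← neighborFinset_eq_filter,
    card_neighborFinset_eq_degree, h.degree_eq] at this
  have hb := h.b_three
  simp only [Finset.sum_range_succ, Finset.sum_range_zero, nbrCount] at this
  rify
  interval_cases j <;> norm_num [hb] at this ⊢ <;> linarith

theorem IsDRG.cast_pos (h : IsDRG G 3 b c a) :
    (0 : ℝ) < b 0 ∧ (0 : ℝ) < b 1 ∧ (0 : ℝ) < b 2 ∧ (0 : ℝ) < c 2 ∧ (0 : ℝ) < c 3 :=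
  ⟨Nat.cast_pos.2 (h.b_pos_s17 (by norm_num)), Nat.cast_pos.2 (h.b_pos_s17 (by norm_num)),
    Nat.cast_pos.2 (h.b_pos_s17 (by norm_num)), Nat.cast_pos.2 (h.c_pos_s17 (i := 1) (by norm_num)),
    Nat.cast_pos.2 (h.c_pos_s17 (i := 2) (by norm_num))⟩

theorem IsDRG.a_zero_s17 (h : IsDRG G 3 b c a) : a 0 = 0 := by
  obtain ⟨x⟩ := h.connected.nonempty
  rw [← h.card_a 0 (by norm_num) x x (SimpleGraph.dist_self)]
  simp only [Nat.card_eq_zero, Set.coe_ofPred, isEmpty_subtype]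
  left
  rintro z ⟨hz, heq⟩
  rw [h.connected.dist_eq_zero_iff] at heq
  exact hz.ne heq

/-- The sum of `v` over the sphere of radius `i` around `x`. -/
noncomputable def sphereSum (G : SimpleGraph V) (v : V → ℝ) (i : ℕ) (x : V) : ℝ :=
  ∑ z, if G.dist x z = i then v z else 0

theorem IsDRG.sum_eq_sum_sphereSum (h : IsDRG G 3 b c a) (v : V → ℝ) (f : ℕ → ℝ) (x : V) :
    ∑ y, f (G.dist x y) * v y = ∑ j ∈ Finset.range 4, f j * sphereSum G v j x := by
  simp_rw [sphereSum, Finset.mul_sum]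
  rw [Finset.sum_comm]
  refine Finset.sum_congr rfl fun y _ => ?_
  have hy : G.dist x y ∈ Finset.range 4 := by
    have := h.le_diam x y
    simp; omega
  simp_rw [mul_ite, mul_zero]
  rw [Finset.sum_ite_eq, if_pos hy]

theorem IsDRG.sphereSum_zero (h : IsDRG G 3 b c a) (v : V → ℝ) (x : V) :
    sphereSum G v 0 x = v x := by
  classical
  simp [sphereSum, h.connected.dist_eq_zero_iff]

theorem mulVec_adjMatrix_eq [DecidableRel G.Adj] {θ : ℝ} {v : V → ℝ}
    (hv : (G.adjMatrix ℝ).mulVec v = θ • v) (z : V) :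
    ∑ y, (if G.Adj z y then v y else 0) = θ * v z := by
  classical
  have := congrFun hv z
  rw [adjMatrix_mulVec_apply] at this
  rw [← Finset.sum_filter, ← neighborFinset_eq_filter, this]
  rfl

/-- The squared length of the standard sequence. -/
noncomputable def cosNorm (b c a : ℕ → ℕ) (θ : ℝ) : ℝ :=
  ∑ l ∈ Finset.range 4, kdist b c l * stdSeq b c a θ l ^ 2

theorem IsDRG.kdist_pos (h : IsDRG G 3 b c a) {i : ℕ} (hi : i < 4) : 0 < kdist b c i := by
  obtain ⟨h0, h1, h2, h3, h4⟩ := h.cast_pos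
  interval_cases i <;> simp only [kdist] <;> positivity

theorem IsDRG.cosNorm_pos (h : IsDRG G 3 b c a) (θ : ℝ) : 0 < cosNorm b c a θ := by
  refine Finset.sum_pos' (fun i hi => ?_) ⟨0, by simp, by simp [kdist, stdSeq]⟩
  have := h.kdist_pos (Finset.mem_range.1 hi)
  positivity

end Counting

/-- The matrix of cosines: a multiple of the projection on the eigenspace of `θ`. -/
noncomputable def cosMat {V : Type*} (G : SimpleGraph V) (b c a : ℕ → ℕ) (θ : ℝ) :
    Matrix V V ℝ :=
  Matrix.of fun x y => stdSeq b c a θ (G.dist x y)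

theorem cosMat_comm {V : Type*} {G : SimpleGraph V} {b c a : ℕ → ℕ} (θ : ℝ) (x y : V) :
    cosMat G b c a θ x y = cosMat G b c a θ y x := by
  simp [cosMat, SimpleGraph.dist_comm]

section Eigenvectors

variable {V : Type*} [Fintype V] [DecidableEq V] {G : SimpleGraph V} [DecidableRel G.Adj]
  {b c a : ℕ → ℕ}

theorem IsDRG.sphereSum_rec (h : IsDRG G 3 b c a) {θ : ℝ} {v : V → ℝ}
    (hv : (G.adjMatrix ℝ).mulVec v = θ • v) (i : ℕ) (x : V) :
    θ * sphereSum G v i x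
      = ∑ j ∈ Finset.range 4, nbrCount b c a j i * sphereSum G v j x := by
  rw [← h.sum_eq_sum_sphereSum v (fun j => (nbrCount b c a j i : ℝ)) x, sphereSum,
    Finset.mul_sum]
  simp_rw [mul_ite, mul_zero, ← mulVec_adjMatrix_eq hv]
  simp_rw [← h.card_nbr, Finset.card_filter, Nat.cast_sum, Finset.sum_mul]
  rw [Finset.sum_comm]
  refine Finset.sum_congr rfl fun z _ => ?_
  split_ifs with hz
  · exact Finset.sum_congr rfl fun y _ => by simp [hz, G.adj_comm]
  · simp [hz]

/-- The scaled standard sequence `k_l u_l(θ)`: the eigenvalue of the distance-`l` matrix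
corresponding to `θ`. -/
noncomputable def distEig (b c a : ℕ → ℕ) (θ : ℝ) (l : ℕ) : ℝ :=
  kdist b c l * stdSeq b c a θ l

theorem IsDRG.sphereSum_eq (h : IsDRG G 3 b c a) {θ : ℝ} {v : V → ℝ}
    (hv : (G.adjMatrix ℝ).mulVec v = θ • v) (x : V) {i : ℕ} (hi : i < 4) :
    sphereSum G v i x = distEig b c a θ i * v x := by
  obtain ⟨h0, h1, h2, h3, h4⟩ := h.cast_pos
  have e0 := h.sphereSum_rec hv 0 x
  have e1 := h.sphereSum_rec hv 1 x
  have e2 := h.sphereSum_rec hv 2 x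
  have hc1 := h.c_one_s17
  have ha0 := h.a_zero_s17
  simp only [Finset.sum_range_succ, Finset.sum_range_zero, nbrCount] at e0 e1 e2
  norm_num [h.sphereSum_zero, hc1, ha0] at e0 e1 e2
  have s1 : sphereSum G v 1 x = θ * v x := e0.symm
  have s2 : sphereSum G v 2 x = ((θ - a 1) * θ - b 0) * v x / c 2 := by
    rw [eq_div_iff h3.ne']
    rw [s1] at e1; linarith
  have s3 : sphereSum G v 3 x
      = ((θ - a 2) * (((θ - a 1) * θ - b 0) / c 2) - b 1 * θ) * v x / c 3 := by
    rw [eq_div_iff h4.ne']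
    rw [s1, s2] at e2
    field_simp at e2 ⊢
    linarith
  unfold distEig
  interval_cases i
  · simp [kdist, stdSeq, h.sphereSum_zero]
  · rw [s1]; simp only [kdist, stdSeq]; field_simp
  · rw [s2]; simp only [kdist, stdSeq, hc1]; field_simp; push_cast; ring
  · rw [s3]; simp only [kdist, stdSeq, hc1]; field_simp; push_cast; ring

/-- The last equation of the three term recurrence, which characterises the eigenvalues. -/
theorem IsDRG.stdSeq_last (h : IsDRG G 3 b c a) {θ : ℝ} (hθ : IsEig G θ) :
    c 3 * stdSeq b c a θ 2 + a 3 * stdSeq b c a θ 3 = θ * stdSeq b c a θ 3 := by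
  obtain ⟨v, hv0, hv⟩ := hθ
  obtain ⟨x, hx⟩ : ∃ x, v x ≠ 0 := by
    by_contra! hcon
    exact hv0 (funext hcon)
  obtain ⟨h0, h1, h2, h3, h4⟩ := h.cast_pos
  have e3 := h.sphereSum_rec hv 3 x
  simp only [Finset.sum_range_succ, Finset.sum_range_zero, nbrCount] at e3
  norm_num [h.sphereSum_eq hv x] at e3
  have e : θ * distEig b c a θ 3 = b 2 * distEig b c a θ 2 + a 3 * distEig b c a θ 3 :=
    mul_right_cancel₀ hx (by linarith)
  have hk : kdist b c 3 * c 3 = kdist b c 2 * b 2 := by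
    simp only [kdist]; field_simp
  have hk3 : 0 < kdist b c 3 := by simp only [kdist]; positivity
  unfold distEig at e
  refine mul_left_cancel₀ hk3.ne' ?_
  linear_combination (stdSeq b c a θ 2) * hk - e

theorem IsDRG.kdist_eq (h : IsDRG G 3 b c a) (x : V) {i : ℕ} (hi : i < 4) :
    (#{z | G.dist x z = i} : ℝ) = kdist b c i := by
  have hv : (G.adjMatrix ℝ).mulVec (fun _ => 1) = (b 0 : ℝ) • fun _ => (1 : ℝ) := by
    funext z
    simp [adjMatrix_mulVec_apply, h.degree_eq]
  have hs := h.sphereSum_eq hv x hi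
  simp only [sphereSum, mul_one, Finset.sum_boole] at hs
  rw [hs, distEig]
  obtain ⟨h0, h1, h2, h3, h4⟩ := h.cast_pos
  have p1 : (a 1 : ℝ) + b 1 + c 1 = b 0 := by exact_mod_cast h.sum_params (j := 0) (by norm_num)
  have p2 : (a 2 : ℝ) + b 2 + c 2 = b 0 := by exact_mod_cast h.sum_params (j := 1) (by norm_num)
  have hc1 : (c 1 : ℝ) = 1 := by exact_mod_cast h.c_one_s17
  have u1 : stdSeq b c a (b 0) 1 = 1 := by simp only [stdSeq]; field_simp
  have u2 : stdSeq b c a (b 0) 2 = 1 := by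
    simp only [stdSeq, hc1]; field_simp; linarith
  have u3 : stdSeq b c a (b 0) 3 = 1 := by
    have : stdSeq b c a (b 0) 3
      = ((b 0 - a 2) * stdSeq b c a (b 0) 2 - c 2 * stdSeq b c a (b 0) 1) / b 2 := rfl
    rw [this, u1, u2]; field_simp; linarith
  interval_cases i
  · simp [stdSeq]
  · simp [u1]
  · simp [u2]
  · simp [u3]

theorem IsDRG.sum_dist (h : IsDRG G 3 b c a) (f : ℕ → ℝ) (x : V) :
    ∑ y, f (G.dist x y) = ∑ l ∈ Finset.range 4, kdist b c l * f l := by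
  have := h.sum_eq_sum_sphereSum (fun _ => 1) f x
  simp only [mul_one] at this
  rw [this]
  refine Finset.sum_congr rfl fun i hi => ?_
  rw [← h.kdist_eq x (Finset.mem_range.1 hi), sphereSum, Finset.sum_boole, mul_comm]

theorem IsDRG.cosMat_mulVec (h : IsDRG G 3 b c a) {θ : ℝ} {v : V → ℝ}
    (hv : (G.adjMatrix ℝ).mulVec v = θ • v) :
    (cosMat G b c a θ).mulVec v = cosNorm b c a θ • v := by
  funext x
  simp only [Matrix.mulVec, dotProduct, cosMat, Matrix.of_apply, Pi.smul_apply, smul_eq_mul]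
  rw [h.sum_eq_sum_sphereSum v (stdSeq b c a θ) x, cosNorm, Finset.sum_mul]
  refine Finset.sum_congr rfl fun i hi => ?_
  rw [h.sphereSum_eq hv x (Finset.mem_range.1 hi), distEig]
  ring

theorem IsDRG.adjMatrix_mulVec_cosMat (h : IsDRG G 3 b c a) {θ : ℝ} (hθ : IsEig G θ) (w : V) :
    (G.adjMatrix ℝ).mulVec (fun y => cosMat G b c a θ y w)
      = θ • fun y => cosMat G b c a θ y w := by
  funext x
  rw [adjMatrix_mulVec_apply, neighborFinset_eq_filter, Finset.sum_filter]
  simp only [cosMat, Matrix.of_apply, Pi.smul_apply, smul_eq_mul]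
  simp_rw [SimpleGraph.dist_comm (v := w)]
  rw [h.sum_nbr w x (stdSeq b c a θ)]
  have hle := h.le_diam w x
  have hlast := h.stdSeq_last hθ
  obtain ⟨h0, h1, h2, h3, h4⟩ := h.cast_pos
  have ha0 := h.a_zero_s17
  generalize G.dist w x = j at hle
  have r3 : stdSeq b c a θ 3
      = ((θ - a 2) * stdSeq b c a θ 2 - c 2 * stdSeq b c a θ 1) / b 2 := rfl
  have r2 : stdSeq b c a θ 2 = ((θ - a 1) * stdSeq b c a θ 1 - c 1) / b 1 := rfl
  have r1 : stdSeq b c a θ 1 = θ / b 0 := rfl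
  have r0 : stdSeq b c a θ 0 = 1 := rfl
  simp only [Finset.sum_range_succ, Finset.sum_range_zero, nbrCount]
  interval_cases j <;> norm_num [ha0]
  · rw [r1, r0]; field_simp
  · rw [r2, r0]; field_simp; ring
  · rw [r3]; field_simp; ring
  · linarith

theorem IsDRG.cosMat_mul_cosMat (h : IsDRG G 3 b c a) {θ : ℝ} (hθ : IsEig G θ) :
    cosMat G b c a θ * cosMat G b c a θ = cosNorm b c a θ • cosMat G b c a θ := by
  ext x w
  exact congrFun (h.cosMat_mulVec (h.adjMatrix_mulVec_cosMat hθ w)) x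

/-- Biggs multiplicity formula. -/
theorem IsDRG.eigMult_mul_cosNorm (h : IsDRG G 3 b c a) {θ : ℝ} (hθ : IsEig G θ) :
    eigMult G θ * cosNorm b c a θ = Fintype.card V := by
  have hs := (h.cosNorm_pos θ).ne'
  have hproj : LinearMap.IsProj (Module.End.eigenspace (Matrix.toLin' (G.adjMatrix ℝ)) θ)
      (Matrix.toLin' ((cosNorm b c a θ)⁻¹ • cosMat G b c a θ)) := by
    constructor
    · intro v
      rw [Module.End.mem_eigenspace_iff, Matrix.toLin'_apply, Matrix.toLin'_apply,
        Matrix.smul_mulVec, Matrix.mulVec_smul, smul_comm θ]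
      congr 1
      rw [Matrix.mulVec_mulVec, ← Matrix.smul_mulVec]
      congr 1
      ext x w
      exact congrFun (h.adjMatrix_mulVec_cosMat hθ w) x
    · intro v hv
      rw [Module.End.mem_eigenspace_iff, Matrix.toLin'_apply] at hv
      rw [Matrix.toLin'_apply, Matrix.smul_mulVec, h.cosMat_mulVec hv, smul_smul,
        inv_mul_cancel₀ hs, one_smul]
  have ht := hproj.trace
  rw [Matrix.trace_toLin'_eq, Matrix.trace_smul] at ht
  have htr : (cosMat G b c a θ).trace = Fintype.card V := by
    simp [Matrix.trace, cosMat, stdSeq]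
  rw [htr, smul_eq_mul] at ht
  rw [eigMult, ← ht]
  field_simp

end Eigenvectors

section Krein

variable {V : Type*} [Fintype V] [DecidableEq V] {G : SimpleGraph V} [DecidableRel G.Adj]
  {b c a : ℕ → ℕ}

/-- The Krein parameter of the eigenvalues `α, β, γ`, up to a positive factor. -/
noncomputable def kreinSum (b c a : ℕ → ℕ) (α β γ : ℝ) : ℝ :=
  ∑ l ∈ Finset.range 4,
    kdist b c l * (stdSeq b c a α l * stdSeq b c a β l * stdSeq b c a γ l)

theorem IsDRG.sum_cosMat_mul (h : IsDRG G 3 b c a) {θ : ℝ} (hθ : IsEig G θ) (z w : V) :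
    ∑ x, cosMat G b c a θ x z * cosMat G b c a θ x w
      = cosNorm b c a θ * cosMat G b c a θ z w := by
  have := congrFun (congrFun (h.cosMat_mul_cosMat hθ) z) w
  rw [Matrix.mul_apply] at this
  simp_rw [cosMat_comm θ _ z]
  exact this

theorem IsDRG.sum_sq_triple (h : IsDRG G 3 b c a) {α β γ : ℝ} (hα : IsEig G α)
    (hβ : IsEig G β) (hγ : IsEig G γ) :
    ∑ x, ∑ y, ∑ w, (∑ z, cosMat G b c a α x z * cosMat G b c a β y z * cosMat G b c a γ w z) ^ 2
      = cosNorm b c a α * cosNorm b c a β * cosNorm b c a γ * Fintype.card V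
        * kreinSum b c a α β γ := by
  have hsplit : ∀ z z' : V, ∑ x, ∑ y, ∑ w,
      (cosMat G b c a α x z * cosMat G b c a β y z * cosMat G b c a γ w z)
        * (cosMat G b c a α x z' * cosMat G b c a β y z' * cosMat G b c a γ w z')
      = (cosNorm b c a α * cosMat G b c a α z z') * (cosNorm b c a β * cosMat G b c a β z z')
        * (cosNorm b c a γ * cosMat G b c a γ z z') := by
    intro z z'
    rw [← h.sum_cosMat_mul hα, ← h.sum_cosMat_mul hβ, ← h.sum_cosMat_mul hγ,
      Finset.sum_mul_sum, Finset.sum_mul]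
    refine Finset.sum_congr rfl fun x _ => ?_
    rw [Finset.sum_mul]
    refine Finset.sum_congr rfl fun y _ => ?_
    rw [Finset.mul_sum]
    exact Finset.sum_congr rfl fun w _ => by ring
  calc _ = ∑ z, ∑ z', ∑ x, ∑ y, ∑ w,
      (cosMat G b c a α x z * cosMat G b c a β y z * cosMat G b c a γ w z)
        * (cosMat G b c a α x z' * cosMat G b c a β y z' * cosMat G b c a γ w z') := by
        have swap : ∀ F : V → V → V → V → ℝ,
            ∑ x, ∑ y, ∑ w, ∑ z, F x y w z = ∑ z, ∑ x, ∑ y, ∑ w, F x y w z := fun F =>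
          (Finset.sum_congr rfl fun x _ => Finset.sum_congr rfl fun y _ =>
            Finset.sum_comm).trans ((Finset.sum_congr rfl fun x _ => Finset.sum_comm).trans
              Finset.sum_comm)
        simp_rw [sq, Finset.sum_mul_sum]
        rw [swap]
        exact Finset.sum_congr rfl fun z _ => swap _
    _ = ∑ z, ∑ z', cosNorm b c a α * cosNorm b c a β * cosNorm b c a γ *
          (fun l => stdSeq b c a α l * stdSeq b c a β l * stdSeq b c a γ l) (G.dist z z') := by
        simp_rw [hsplit]
        refine Finset.sum_congr rfl fun z _ => Finset.sum_congr rfl fun z' _ => ?_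
        simp only [cosMat, Matrix.of_apply]
        ring
    _ = _ := by
        simp_rw [← Finset.mul_sum]
        simp_rw [h.sum_dist (fun l => stdSeq b c a α l * stdSeq b c a β l * stdSeq b c a γ l)]
        rw [Finset.sum_const, Finset.card_univ, nsmul_eq_mul, kreinSum]
        ring

/-- The Krein condition. -/
theorem IsDRG.kreinSum_nonneg (h : IsDRG G 3 b c a) {α β γ : ℝ} (hα : IsEig G α)
    (hβ : IsEig G β) (hγ : IsEig G γ) : 0 ≤ kreinSum b c a α β γ := by
  have hs := h.sum_sq_triple hα hβ hγ
  have hn : (0 : ℝ) < Fintype.card V := by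
    have := h.connected.nonempty
    exact_mod_cast Fintype.card_pos
  have h1 := h.cosNorm_pos α
  have h2 := h.cosNorm_pos β
  have h3 := h.cosNorm_pos γ
  refine nonneg_of_mul_nonneg_right (a := cosNorm b c a α * cosNorm b c a β * cosNorm b c a γ
    * Fintype.card V) ?_ (by positivity)
  rw [← hs]
  positivity

/-- A vanishing Krein parameter forces linear relations between triple intersection numbers. -/
theorem IsDRG.sum_triple_eq_zero (h : IsDRG G 3 b c a) {α β γ : ℝ} (hα : IsEig G α)
    (hβ : IsEig G β) (hγ : IsEig G γ) (hK : kreinSum b c a α β γ = 0) (x y w : V) :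
    ∑ z, stdSeq b c a α (G.dist x z) * stdSeq b c a β (G.dist y z)
      * stdSeq b c a γ (G.dist w z) = 0 := by
  have hs := h.sum_sq_triple hα hβ hγ
  rw [hK, mul_zero, Finset.sum_eq_zero_iff_of_nonneg (fun _ _ => by positivity)] at hs
  have hx := hs x (Finset.mem_univ _)
  rw [Finset.sum_eq_zero_iff_of_nonneg (fun _ _ => by positivity)] at hx
  have hy := hx y (Finset.mem_univ _)
  rw [Finset.sum_eq_zero_iff_of_nonneg (fun _ _ => by positivity)] at hy
  exact pow_eq_zero_iff (two_ne_zero) |>.1 (hy w (Finset.mem_univ _))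

end Krein

section LocalStructure

/-- A system of `16`-subsets indexed by the vertices of a `4`-valent graph on `21` vertices, whose
intersection sizes are those of the sets of vertices at distance `3` from two given
neighbours of a vertex in a graph with intersection array `{21, 16, 8; 1, 4, 14}`. -/
structure IsLocalSystem {α β : Type*} [Fintype α] [DecidableEq β] (H : SimpleGraph α)
    [DecidableRel H.Adj] (C : α → Finset β) : Prop where
  card_vert : Fintype.card α = 21
  degree_eq : ∀ y, H.degree y = 4
  card_set : ∀ y, #(C y) = 16
  card_inter_of_adj : ∀ y w, H.Adj y w →
    #(C y ∩ C w) + 6 * #{u | H.Adj y u ∧ H.Adj w u} = 2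
  card_inter_of_not_adj : ∀ y w, y ≠ w → ¬ H.Adj y w →
    #(C y ∩ C w) + 6 * #{u | H.Adj y u ∧ H.Adj w u} = 10
  card_fiber : ∀ z, #{y | z ∈ C y} = 7

/-- Vertices are joined when their distance in `H` is at least `3`. -/
def farGraph {α : Type*} (H : SimpleGraph α) : SimpleGraph α where
  Adj y w := y ≠ w ∧ ¬ H.Adj y w ∧ ∀ u, H.Adj y u → ¬ H.Adj w u
  symm := ⟨fun _ _ h => ⟨h.1.symm, fun h' => h.2.1 h'.symm, fun u h1 h2 => h.2.2 u h2 h1⟩⟩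
  loopless := ⟨fun _ h => h.1 rfl⟩

namespace IsLocalSystem

variable {α β : Type*} [Fintype α] [DecidableEq β] {H : SimpleGraph α} [DecidableRel H.Adj]
  {C : α → Finset β}

theorem not_adj (h : IsLocalSystem H C) {y w u : α} (hy : H.Adj y u) (hw : H.Adj w u) :
    ¬ H.Adj y w := by
  intro hyw
  have h1 := h.card_inter_of_adj y w hyw
  have h2 : 0 < #{u | H.Adj y u ∧ H.Adj w u} := Finset.card_pos.2 ⟨u, by simp [hy, hw]⟩
  omega

theorem eq_of_common (h : IsLocalSystem H C) {y w u u' : α} (hne : y ≠ w) (hy : H.Adj y u)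
    (hw : H.Adj w u) (hy' : H.Adj y u') (hw' : H.Adj w u') : u = u' := by
  have h1 := h.card_inter_of_not_adj y w hne (h.not_adj hy hw)
  have h2 : #{u | H.Adj y u ∧ H.Adj w u} ≤ 1 := by omega
  exact Finset.card_le_one.1 h2 u (by simp [hy, hw]) u' (by simp [hy', hw'])

theorem card_inter_of_far (h : IsLocalSystem H C) {y w : α} (hyw : (farGraph H).Adj y w) :
    #(C y ∩ C w) = 10 := by
  have h1 := h.card_inter_of_not_adj y w hyw.1 hyw.2.1
  have h2 : #{u | H.Adj y u ∧ H.Adj w u} = 0 := by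
    rw [Finset.card_eq_zero, Finset.filter_eq_empty_iff]
    exact fun u _ hu => hyw.2.2 u hu.1 hu.2
  omega

theorem card_inter_le (h : IsLocalSystem H C) {y w : α} (hne : y ≠ w)
    (hyw : ¬ (farGraph H).Adj y w) : #(C y ∩ C w) ≤ 4 := by
  by_cases hadj : H.Adj y w
  · have := h.card_inter_of_adj y w hadj
    omega
  · have h1 := h.card_inter_of_not_adj y w hne hadj
    have h2 : 0 < #{u | H.Adj y u ∧ H.Adj w u} := by
      have : ∃ u, H.Adj y u ∧ H.Adj w u := by
        by_contra! hcon
        exact hyw ⟨hne, hadj, hcon⟩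
      obtain ⟨u, hu⟩ := this
      exact Finset.card_pos.2 ⟨u, by simpa using hu⟩
    omega

theorem card_far [DecidableRel (farGraph H).Adj] (h : IsLocalSystem H C) (y : α) :
    #((farGraph H).neighborFinset y) = 4 := by
  classical
  set D := (H.neighborFinset y).biUnion fun u => (H.neighborFinset u).erase y with hD
  have hDcard : #D = 12 := by
    rw [hD, Finset.card_biUnion]
    · have : ∀ u ∈ H.neighborFinset y, #((H.neighborFinset u).erase y) = 3 := by
        intro u hu
        rw [Finset.card_erase_of_mem (by simpa [H.adj_comm] using hu),
          card_neighborFinset_eq_degree, h.degree_eq]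
      rw [Finset.sum_congr rfl this, Finset.sum_const, card_neighborFinset_eq_degree,
        h.degree_eq]
      rfl
    · intro u hu u' hu' hne
      rw [Function.onFun, Finset.disjoint_left]
      intro v hv hv'
      simp only [Finset.mem_erase, mem_neighborFinset] at hv hv' hu hu'
      exact hne (h.eq_of_common hv.1.symm (by simpa using hu) hv.2.symm (by simpa using hu')
        hv'.2.symm)
  have hdisj : Disjoint (H.neighborFinset y) D := by
    rw [Finset.disjoint_left]
    intro v hv hv'
    simp only [hD, Finset.mem_biUnion, Finset.mem_erase, mem_neighborFinset] at hv hv'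
    obtain ⟨u, hu, -, huv⟩ := hv'
    exact h.not_adj hu huv.symm hv
  have hy : y ∉ H.neighborFinset y ∪ D := by
    simp [hD]
  have hfar : (farGraph H).neighborFinset y = (insert y (H.neighborFinset y ∪ D))ᶜ := by
    ext w
    rw [mem_neighborFinset]
    change (y ≠ w ∧ ¬ H.Adj y w ∧ ∀ u, H.Adj y u → ¬ H.Adj w u) ↔ _
    simp only [mem_neighborFinset, Finset.mem_compl, Finset.mem_insert,
      Finset.mem_union, hD, Finset.mem_biUnion, Finset.mem_erase, not_or, not_exists, not_and]
    exact ⟨fun hw => ⟨hw.1.symm, hw.2.1, fun u hu _ huw => hw.2.2 u hu huw.symm⟩,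
      fun hw => ⟨Ne.symm hw.1, hw.2.1, fun u hu huw => hw.2.2 u hu hw.1 huw.symm⟩⟩
  rw [hfar, Finset.card_compl, Finset.card_insert_of_notMem hy, Finset.card_union_of_disjoint hdisj,
    hDcard, card_neighborFinset_eq_degree, h.degree_eq, h.card_vert]

/-- Among three vertices far from `y`, two are far from each other. -/
theorem exists_far_pair (h : IsLocalSystem H C) {y p q r : α} (hp : (farGraph H).Adj y p)
    (hq : (farGraph H).Adj y q) (hr : (farGraph H).Adj y r) (hpq : p ≠ q) (hpr : p ≠ r)
    (hqr : q ≠ r) :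
    (farGraph H).Adj p q ∨ (farGraph H).Adj p r ∨ (farGraph H).Adj q r := by
  by_contra! hcon
  have e1 := h.card_inter_le hpq hcon.1
  have e2 := h.card_inter_le hpr hcon.2.1
  have e3 := h.card_inter_le hqr hcon.2.2
  have f1 := h.card_inter_of_far hp
  have f2 := h.card_inter_of_far hq
  have f3 := h.card_inter_of_far hr
  have i1 := Finset.card_union_add_card_inter (C y ∩ C p) (C y ∩ C q)
  have i2 := Finset.card_union_add_card_inter (C y ∩ C p ∪ C y ∩ C q) (C y ∩ C r)
  have j1 : #(C y ∩ C p ∩ (C y ∩ C q)) ≤ #(C p ∩ C q) :=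
    Finset.card_le_card fun z hz => by simp at hz ⊢; tauto
  have j2 : #((C y ∩ C p ∪ C y ∩ C q) ∩ (C y ∩ C r)) ≤ #(C p ∩ C r) + #(C q ∩ C r) :=
    (Finset.card_le_card fun z hz => by simp at hz ⊢; tauto).trans (Finset.card_union_le _ _)
  have j3 : #(C y ∩ C p ∪ C y ∩ C q ∪ C y ∩ C r) ≤ #(C y) :=
    Finset.card_le_card fun z hz => by simp at hz ⊢; tauto
  have := h.card_set y
  omega

theorem subset_union_and_not_adj (h : IsLocalSystem H C) {y p q : α}
    (hp : (farGraph H).Adj y p) (hq : (farGraph H).Adj y q) (hpq : p ≠ q)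
    (hnot : ¬ (farGraph H).Adj p q) : C y ⊆ C p ∪ C q ∧ ¬ H.Adj p q := by
  have e1 := h.card_inter_le hpq hnot
  have f1 := h.card_inter_of_far hp
  have f2 := h.card_inter_of_far hq
  have i1 := Finset.card_union_add_card_inter (C y ∩ C p) (C y ∩ C q)
  have j1 : #(C y ∩ C p ∩ (C y ∩ C q)) ≤ #(C p ∩ C q) :=
    Finset.card_le_card fun z hz => by simp at hz ⊢; tauto
  have s3 : C y ∩ C p ∪ C y ∩ C q ⊆ C y := fun z hz => by simp at hz ⊢; tauto
  have j3 := Finset.card_le_card s3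
  have hy := h.card_set y
  refine ⟨fun z hz => ?_, fun hadj => ?_⟩
  · rw [← Finset.eq_of_subset_of_card_le s3 (by omega)] at hz
    simp at hz ⊢; tauto
  · have := h.card_inter_of_adj p q hadj
    omega

theorem exists_common (h : IsLocalSystem H C) {y u w : α} (hu : H.Adj y u)
    (hw : (farGraph H).Adj y w) : ∃ v, H.Adj u v ∧ H.Adj w v := by
  classical
  have hg : ∀ v, H.Adj w v → ∃ u, H.Adj y u ∧ H.Adj v u := by
    intro v hv
    by_contra! hcon
    have hvy : (farGraph H).Adj y v := by
      refine ⟨?_, fun hyv => hw.2.2 v hyv hv, hcon⟩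
      rintro rfl
      exact hw.2.1 hv.symm
    exact (h.subset_union_and_not_adj hw hvy hv.ne fun hf => hf.2.1 hv).2 hv
  choose! g hg using hg
  have himg : (H.neighborFinset w).image g = H.neighborFinset y := by
    apply Finset.eq_of_subset_of_card_le
    · intro v hv
      simp only [Finset.mem_image, mem_neighborFinset] at hv ⊢
      obtain ⟨v, hv, rfl⟩ := hv
      exact (hg v hv).1
    · rw [Finset.card_image_of_injOn, card_neighborFinset_eq_degree,
        card_neighborFinset_eq_degree, h.degree_eq, h.degree_eq]
      intro v hv v' hv' hvv
      simp only [coe_neighborFinset, mem_neighborSet] at hv hv'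
      have hne : g v ≠ w := by
        rintro hgw
        exact hw.2.1 (hgw ▸ (hg v hv).1)
      exact h.eq_of_common hne (hg v hv).2.symm hv (hvv ▸ (hg v' hv').2.symm) hv'
  have hmem : u ∈ (H.neighborFinset w).image g := by rw [himg]; simpa using hu
  simp only [Finset.mem_image, mem_neighborFinset] at hmem
  obtain ⟨v, hv, rfl⟩ := hmem
  exact ⟨v, (hg v hv).2.symm, hv⟩

theorem exists_pair_common (h : IsLocalSystem H C) {y u : α} (hu : H.Adj y u) :
    ∃ p q v, (farGraph H).Adj y p ∧ (farGraph H).Adj y q ∧ p ≠ q ∧ H.Adj u v ∧ H.Adj p v ∧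
      H.Adj q v := by
  classical
  have hg : ∀ w, (farGraph H).Adj y w → ∃ v, H.Adj u v ∧ H.Adj w v :=
    fun w hw => h.exists_common hu hw
  choose! g hg using hg
  have hcard : #((H.neighborFinset u).erase y) < #((farGraph H).neighborFinset y) := by
    rw [h.card_far, Finset.card_erase_of_mem (by simpa using hu.symm),
      card_neighborFinset_eq_degree, h.degree_eq]
    norm_num
  obtain ⟨p, hp, q, hq, hpq, heq⟩ := Finset.exists_ne_map_eq_of_card_lt_of_maps_to hcard
    (f := g) (fun w hw => by
      simp only [coe_neighborFinset, mem_neighborSet] at hw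
      simp only [Finset.coe_erase, coe_neighborFinset, Set.mem_sdiff, mem_neighborSet,
        Set.mem_singleton_iff]
      refine ⟨(hg w hw).1, ?_⟩
      rintro hgy
      exact hw.2.1 (hgy ▸ (hg w hw).2).symm)
  simp only [mem_neighborFinset] at hp hq
  exact ⟨p, q, g p, hp, hq, hpq, (hg p hp).1, (hg p hp).2, heq ▸ (hg q hq).2⟩

theorem exists_fourth (h : IsLocalSystem H C) {y p q r : α} (hp : (farGraph H).Adj y p)
    (hq : (farGraph H).Adj y q) (hr : (farGraph H).Adj y r) (hpq : p ≠ q) (hpr : p ≠ r)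
    (hqr : q ≠ r) : ∃ s, (farGraph H).Adj y s ∧ p ≠ s ∧ q ≠ s ∧ r ≠ s ∧
      ∀ t, (farGraph H).Adj y t → t = p ∨ t = q ∨ t = r ∨ t = s := by
  classical
  have h3 : #{p, q, r} = 3 := Finset.card_eq_three.2 ⟨p, q, r, hpq, hpr, hqr, rfl⟩
  have hsub : {p, q, r} ⊆ (farGraph H).neighborFinset y := by
    intro t ht
    simp only [Finset.mem_insert, Finset.mem_singleton] at ht
    rw [mem_neighborFinset]
    rcases ht with rfl | rfl | rfl <;> assumption
  have h1 : #((farGraph H).neighborFinset y \ {p, q, r}) = 1 := by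
    rw [Finset.card_sdiff_of_subset hsub, h3, h.card_far]
  obtain ⟨s, hs⟩ := Finset.card_eq_one.1 h1
  have hmem : ∀ t, ((farGraph H).Adj y t ∧ ¬ (t = p ∨ t = q ∨ t = r)) ↔ t = s := by
    intro t
    rw [show t = s ↔ t ∈ ({s} : Finset α) from Finset.mem_singleton.symm, ← hs]
    simp
  have hs' := (hmem s).2 rfl
  refine ⟨s, hs'.1, ?_, ?_, ?_, fun t ht => ?_⟩
  · rintro rfl; simp at hs'
  · rintro rfl; simp at hs'
  · rintro rfl; simp at hs'
  · have := hmem t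
    tauto

theorem far_unique (h : IsLocalSystem H C) {y p q r : α} (hp : (farGraph H).Adj y p)
    (hq : (farGraph H).Adj y q) (hr : (farGraph H).Adj y r) (hpq : (farGraph H).Adj p q)
    (hpr : (farGraph H).Adj p r) : q = r := by
  classical
  by_contra hqr
  obtain ⟨s, hs, hps, hqs, hrs, hall⟩ := h.exists_fourth hp hq hr hpq.ne hpr.ne hqr
  have hpair : ∀ u, H.Adj y u → ∃ p q v, (farGraph H).Adj y p ∧ (farGraph H).Adj y q ∧ p ≠ q ∧
      H.Adj u v ∧ H.Adj p v ∧ H.Adj q v := fun u hu => h.exists_pair_common hu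
  choose! f g v hfg using hpair
  have hnot : ∀ u, H.Adj y u → ¬ (farGraph H).Adj (f u) (g u) := fun u hu hf =>
    hf.2.2 (v u) (hfg u hu).2.2.2.2.1 (hfg u hu).2.2.2.2.2
  have himg : (H.neighborFinset y).image (fun u => s(f u, g u))
      = {s(q, r), s(q, s), s(r, s), s(p, s)} := by
    apply Finset.eq_of_subset_of_card_le
    · intro e he
      simp only [Finset.mem_image, mem_neighborFinset] at he
      obtain ⟨u, hu, rfl⟩ := he
      have hn := hnot u hu
      obtain ⟨h1, h2, h3, -⟩ := hfg u hu
      have hqp := hpq.symm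
      have hrp := hpr.symm
      simp only [Finset.mem_insert, Finset.mem_singleton]
      rcases hall _ h1 with e1 | e1 | e1 | e1 <;> rcases hall _ h2 with e2 | e2 | e2 | e2 <;>
        rw [e1, e2] at h3 hn ⊢ <;> first | exact absurd rfl h3 | contradiction | simp [Sym2.eq_swap]
    · rw [Finset.card_image_of_injOn, card_neighborFinset_eq_degree, h.degree_eq]
      · exact Finset.card_le_four
      · intro u hu u' hu' he
        simp only [coe_neighborFinset, mem_neighborSet] at hu hu'
        obtain ⟨a1, a2, a3, a4, a5, a6⟩ := hfg u hu
        obtain ⟨b1, b2, b3, b4, b5, b6⟩ := hfg u' hu'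
        have hv : v u = v u' := by
          rcases Sym2.eq_iff.1 he with ⟨e1, e2⟩ | ⟨e1, e2⟩
          · rw [← e1] at b5; rw [← e2] at b6
            exact h.eq_of_common a3 a5 a6 b5 b6
          · rw [← e2] at b5; rw [← e1] at b6
            exact h.eq_of_common a3 a5 a6 b6 b5
        have hyv : y ≠ v u := by
          rintro e
          exact a1.2.1 (e ▸ a5).symm
        exact h.eq_of_common hyv hu a4.symm hu' (hv ▸ b4.symm)
  have hfar : ∀ t t', s(t, t') ∈ (H.neighborFinset y).image (fun u => s(f u, g u)) →
      ¬ (farGraph H).Adj t t' := by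
    intro t t' ht
    simp only [Finset.mem_image, mem_neighborFinset] at ht
    obtain ⟨u, hu, he⟩ := ht
    rcases Sym2.eq_iff.1 he with ⟨rfl, rfl⟩ | ⟨rfl, rfl⟩
    · exact hnot u hu
    · exact fun hf => hnot u hu hf.symm
  rw [himg] at hfar
  rcases h.exists_far_pair hq hr hs hqr hqs hrs with hf | hf | hf
  · exact hfar q r (by simp) hf
  · exact hfar q s (by simp) hf
  · exact hfar r s (by simp) hf

theorem exists_far_triangle (h : IsLocalSystem H C) {y : α} {z : β} (hz : z ∈ C y) :
    ∃ p q, (farGraph H).Adj y p ∧ (farGraph H).Adj y q ∧ (farGraph H).Adj p q ∧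
      z ∈ C p ∧ z ∈ C q := by
  classical
  have hcover : ∀ p q, (farGraph H).Adj y p → (farGraph H).Adj y q → p ≠ q →
      ¬ (farGraph H).Adj p q → z ∉ C p → z ∈ C q := by
    intro p q hp hq hpq hf hzp
    have := (h.subset_union_and_not_adj hp hq hpq hf).1 hz
    simpa [hzp] using this
  have hcard := h.card_far y
  obtain ⟨w1, w2, w3, h1, h2, h3, h12, h13, h23⟩ : ∃ w1 w2 w3, (farGraph H).Adj y w1 ∧
      (farGraph H).Adj y w2 ∧ (farGraph H).Adj y w3 ∧ w1 ≠ w2 ∧ w1 ≠ w3 ∧ w2 ≠ w3 := by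
    obtain ⟨w1, w2, w3, h1, h2, h3, hne⟩ :=
      Finset.two_lt_card_iff.1 (show 2 < #((farGraph H).neighborFinset y) by omega)
    exact ⟨w1, w2, w3, by simpa using h1, by simpa using h2, by simpa using h3, hne⟩
  obtain ⟨p, q, r, hp, hq, hr, hpq, hpr, hqr, hf⟩ : ∃ p q r, (farGraph H).Adj y p ∧
      (farGraph H).Adj y q ∧ (farGraph H).Adj y r ∧ p ≠ q ∧ p ≠ r ∧ q ≠ r ∧
      (farGraph H).Adj p q := by
    rcases h.exists_far_pair h1 h2 h3 h12 h13 h23 with hf | hf | hf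
    · exact ⟨w1, w2, w3, h1, h2, h3, h12, h13, h23, hf⟩
    · exact ⟨w1, w3, w2, h1, h3, h2, h13, h12, h23.symm, hf⟩
    · exact ⟨w2, w3, w1, h2, h3, h1, h23, h12.symm, h13.symm, hf⟩
  obtain ⟨s, hs, hps, hqs, hrs, -⟩ := h.exists_fourth hp hq hr hpq hpr hqr
  have npr : ¬ (farGraph H).Adj p r := fun hf' => hqr (h.far_unique hp hq hr hf hf')
  have nps : ¬ (farGraph H).Adj p s := fun hf' => hqs (h.far_unique hp hq hs hf hf')
  have nqr : ¬ (farGraph H).Adj q r := fun hf' => hpr (h.far_unique hq hp hr hf.symm hf')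
  have nqs : ¬ (farGraph H).Adj q s := fun hf' => hps (h.far_unique hq hp hs hf.symm hf')
  have hrs' : (farGraph H).Adj r s := by
    have := h.exists_far_pair hp hr hs hpr hps hrs
    tauto
  by_cases hzp : z ∈ C p
  · by_cases hzq : z ∈ C q
    · exact ⟨p, q, hp, hq, hf, hzp, hzq⟩
    · exact ⟨r, s, hr, hs, hrs', hcover q r hq hr hqr nqr hzq, hcover q s hq hs hqs nqs hzq⟩
  · exact ⟨r, s, hr, hs, hrs', hcover p r hp hr hpr npr hzp, hcover p s hp hs hps nps hzp⟩

theorem eighteen_le (h : IsLocalSystem H C) [DecidableRel (farGraph H).Adj] (z : β) :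
    18 ≤ ∑ y with z ∈ C y, #{p | (farGraph H).Adj y p ∧ z ∈ C p} := by
  classical
  set S : Finset α := {y | z ∈ C y} with hS
  set T : Finset (Finset α) := {t ∈ (farGraph H).cliqueFinset 3 | t ⊆ S} with hT
  have hone : ∀ y ∈ S, 1 ≤ #{t ∈ T | y ∈ t} := by
    intro y hy
    obtain ⟨p, q, hp, hq, hpq, hzp, hzq⟩ := h.exists_far_triangle (z := z) (by simpa [hS] using hy)
    refine Finset.card_pos.2 ⟨{y, p, q}, ?_⟩
    simp only [hT, Finset.mem_filter, mem_cliqueFinset_iff]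
    refine ⟨⟨is3Clique_triple_iff.2 ⟨hp, hq, hpq⟩, ?_⟩, by simp⟩
    intro t ht
    simp only [Finset.mem_insert, Finset.mem_singleton] at ht
    rcases ht with rfl | rfl | rfl <;> simp_all
  have htwo : ∀ y ∈ S, 2 * #{t ∈ T | y ∈ t} ≤ #{p | (farGraph H).Adj y p ∧ z ∈ C p} := by
    intro y hy
    have hsub : ({t ∈ T | y ∈ t}.biUnion fun t => t.erase y)
        ⊆ ({p | (farGraph H).Adj y p ∧ z ∈ C p} : Finset α) := by
      intro p hp
      simp only [hT, hS, Finset.mem_biUnion, Finset.mem_filter, Finset.mem_erase,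
        mem_cliqueFinset_iff, Finset.mem_univ, true_and] at hp ⊢
      obtain ⟨t, ⟨⟨ht, hts⟩, hyt⟩, hpy, hpt⟩ := hp
      exact ⟨ht.1 hyt hpt (Ne.symm hpy), by simpa using hts hpt⟩
    refine le_trans ?_ (Finset.card_le_card hsub)
    rw [Finset.card_biUnion]
    · rw [Finset.sum_congr rfl (g := fun _ => 2), Finset.sum_const, smul_eq_mul, mul_comm]
      intro t ht
      simp only [hT, Finset.mem_filter, mem_cliqueFinset_iff] at ht
      rw [Finset.card_erase_of_mem ht.2, ht.1.1.2]
    · intro t ht t' ht' hne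
      rw [Function.onFun, Finset.disjoint_left]
      intro p hp hp'
      simp only [hT, Finset.coe_filter, Finset.mem_filter, Set.mem_ofPred_eq, Finset.mem_erase,
        mem_cliqueFinset_iff] at ht ht' hp hp'
      obtain ⟨q, hq⟩ : ∃ q, (t.erase y).erase p = {q} := by
        rw [← Finset.card_eq_one, Finset.card_erase_of_mem (by simpa using hp),
          Finset.card_erase_of_mem ht.2, ht.1.1.2]
      obtain ⟨q', hq'⟩ : ∃ q, (t'.erase y).erase p = {q} := by
        rw [← Finset.card_eq_one, Finset.card_erase_of_mem (by simpa using hp'),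
          Finset.card_erase_of_mem ht'.2, ht'.1.1.2]
      have hqm : q ∈ (t.erase y).erase p := by simp [hq]
      have hqm' : q' ∈ (t'.erase y).erase p := by simp [hq']
      simp only [Finset.mem_erase] at hqm hqm'
      have hqq : q = q' := h.far_unique (ht.1.1.1 ht.2 hp.2 hp.1.symm)
        (ht.1.1.1 ht.2 hqm.2.2 hqm.2.1.symm) (ht'.1.1.1 ht'.2 hqm'.2.2 hqm'.2.1.symm)
        (ht.1.1.1 hp.2 hqm.2.2 hqm.1.symm) (ht'.1.1.1 hp'.2 hqm'.2.2 hqm'.1.symm)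
      apply hne
      rw [← Finset.insert_erase ht.2, ← Finset.insert_erase ht'.2,
        ← Finset.insert_erase (Finset.mem_erase.2 hp),
        ← Finset.insert_erase (Finset.mem_erase.2 hp'), hq, hq', hqq]
  have hthree : ∑ y ∈ S, #{t ∈ T | y ∈ t} = 3 * #T := by
    refine (Finset.sum_card_bipartiteAbove_eq_sum_card_bipartiteBelow (s := S) (t := T)
      (fun y t => y ∈ t)).trans ?_
    rw [Finset.sum_congr rfl (g := fun _ => 3), Finset.sum_const, smul_eq_mul, mul_comm]
    intro t ht
    simp only [hT, Finset.mem_filter, mem_cliqueFinset_iff] at ht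
    rw [Finset.bipartiteBelow, Finset.filter_mem_eq_inter, Finset.inter_eq_right.2 ht.2, ht.1.2]
  have hseven : 7 ≤ ∑ y ∈ S, #{t ∈ T | y ∈ t} := by
    rw [← h.card_fiber z, ← hS, Finset.card_eq_sum_ones]
    exact Finset.sum_le_sum hone
  have hsum := Finset.sum_le_sum htwo
  rw [← Finset.mul_sum] at hsum
  omega

theorem false [Fintype β] (h : IsLocalSystem H C) : False := by
  classical
  have hβ : Fintype.card β = 48 := by
    have := Finset.sum_card_bipartiteAbove_eq_sum_card_bipartiteBelow (s := (univ : Finset α))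
      (t := (univ : Finset β)) (fun y z => z ∈ C y)
    simp only [Finset.bipartiteAbove, Finset.bipartiteBelow, Finset.filter_univ_mem, h.card_set,
      h.card_fiber, Finset.sum_const, Finset.card_univ, h.card_vert, smul_eq_mul] at this
    omega
  have hle : 48 * 18 ≤ ∑ z : β, ∑ y with z ∈ C y, #{p | (farGraph H).Adj y p ∧ z ∈ C p} := by
    rw [← hβ, ← smul_eq_mul, ← Finset.card_univ, ← Finset.sum_const]
    exact Finset.sum_le_sum fun z _ => h.eighteen_le z
  have heq : ∑ z : β, ∑ y with z ∈ C y, #{p | (farGraph H).Adj y p ∧ z ∈ C p} = 21 * 40 := by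
    simp_rw [Finset.sum_filter]
    rw [Finset.sum_comm, ← h.card_vert, ← smul_eq_mul, ← Finset.card_univ, ← Finset.sum_const]
    refine Finset.sum_congr rfl fun y _ => ?_
    rw [← Finset.sum_filter, Finset.filter_univ_mem]
    have := Finset.sum_card_bipartiteAbove_eq_sum_card_bipartiteBelow (s := C y)
      (t := (farGraph H).neighborFinset y) (fun z p => z ∈ C p)
    have e : ∀ z, #{p | (farGraph H).Adj y p ∧ z ∈ C p}
        = #(((farGraph H).neighborFinset y).bipartiteAbove (fun z p => z ∈ C p) z) := by
      intro z
      rw [Finset.bipartiteAbove, neighborFinset_eq_filter, Finset.filter_filter]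
    simp_rw [e]
    rw [this, Finset.sum_congr rfl (g := fun _ => 10), Finset.sum_const, h.card_far]
    · rfl
    · intro p hp
      rw [Finset.bipartiteBelow, Finset.filter_mem_eq_inter]
      exact h.card_inter_of_far (by simpa using hp)
  omega

end IsLocalSystem

end LocalStructure

section Shilla

/-- The relations between the intersection numbers of a Shilla distance-regular graph
with `b(Γ) = 3`. -/
structure ShillaParams (b c a : ℕ → ℕ) : Prop where
  three_le : 3 ≤ a 3
  a_one : a 1 + 3 = a 3
  a_two : a 2 + b 2 + c 2 = 3 * a 3
  b_zero : b 0 = 3 * a 3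
  b_one : b 1 = 2 * a 3 + 2
  c_one_s17 : c 1 = 1
  c_three : c 3 = 2 * a 3
  b_two_pos : 0 < b 2
  c_two_pos : 0 < c 2

theorem IsShilla.params {V : Type*} [Fintype V] [DecidableEq V] {G : SimpleGraph V}
    [DecidableRel G.Adj] {b c a : ℕ → ℕ} (hG : IsShilla G b c a) (hβ : a 3 = a 1 + 3) :
    ShillaParams b c a := by
  have h := hG.drg
  have hc1 := h.c_one_s17
  obtain ⟨hb0, hb1, -, -, hc3⟩ := h.cast_pos
  have hk : b 0 = 3 * a 3 := by
    have hlast := h.stdSeq_last hG.second.1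
    have h2 : (c 3 : ℝ) * stdSeq b c a (a 3) 2 = 0 := by linarith
    have h3 : ((a 3 : ℝ) - a 1) * (a 3 / b 0) - c 1 = 0 := by
      simpa [stdSeq, hb1.ne', hc3.ne'] using h2
    rw [hc1, hβ] at h3
    field_simp at h3
    push_cast at h3
    rw [hβ]
    have : (b 0 : ℝ) = ((3 * (a 1 + 3) : ℕ) : ℝ) := by push_cast; linarith
    exact_mod_cast this
  have s1 := h.sum_params (j := 0) (by norm_num)
  have s2 := h.sum_params (j := 1) (by norm_num)
  have s3 := h.sum_params (j := 2) (by norm_num)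
  have hb3 := h.b_three
  have hp1 := h.b_pos_s17 (i := 2) (by norm_num)
  have hp2 := h.c_pos_s17 (i := 1) (by norm_num)
  norm_num at s1 s2 s3 hp2
  constructor <;> omega

namespace ShillaParams

variable {b c a : ℕ → ℕ}

theorem cast_eqs (h : ShillaParams b c a) : (a 1 : ℝ) = a 3 - 3 ∧
    (a 2 : ℝ) = 3 * a 3 - b 2 - c 2 ∧ (b 0 : ℝ) = 3 * a 3 ∧ (b 1 : ℝ) = 2 * a 3 + 2 ∧
    (c 1 : ℝ) = 1 ∧ (c 3 : ℝ) = 2 * a 3 := by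
  have h1 := h.a_one
  have h2 := h.a_two
  refine ⟨?_, ?_, ?_, ?_, ?_, ?_⟩
  · rw [← h1]; push_cast; ring
  · have : ((a 2 + b 2 + c 2 : ℕ) : ℝ) = ((3 * a 3 : ℕ) : ℝ) := by rw [h2]
    push_cast at this
    linarith
  · rw [h.b_zero]; push_cast; ring
  · rw [h.b_one]; push_cast; ring
  · rw [h.c_one_s17]; norm_num
  · rw [h.c_three]; push_cast; ring

theorem cast_pos (h : ShillaParams b c a) :
    (3 : ℝ) ≤ a 3 ∧ (0 : ℝ) < b 2 ∧ (0 : ℝ) < c 2 :=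
  ⟨by exact_mod_cast h.three_le, by exact_mod_cast h.b_two_pos, by exact_mod_cast h.c_two_pos⟩

theorem kdist_two (h : ShillaParams b c a) :
    kdist b c 2 = 6 * a 3 * (a 3 + 1) / c 2 := by
  obtain ⟨-, -, e0, e1, -, -⟩ := h.cast_eqs
  simp only [kdist, e0, e1]
  ring

theorem kdist_three (h : ShillaParams b c a) :
    kdist b c 3 = 3 * (a 3 + 1) * b 2 / c 2 := by
  obtain ⟨-, -, e0, e1, -, e3⟩ := h.cast_eqs
  obtain ⟨p1, p2, p3⟩ := h.cast_pos
  simp only [kdist, e0, e1, e3]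
  field_simp

theorem stdSeq_one (h : ShillaParams b c a) (θ : ℝ) : stdSeq b c a θ 1 = θ / (3 * a 3) := by
  obtain ⟨-, -, e0, -, -, -⟩ := h.cast_eqs
  simp only [stdSeq, e0]

theorem stdSeq_two (h : ShillaParams b c a) (θ : ℝ) :
    stdSeq b c a θ 2 = (θ - a 3) * (θ + 3) / (6 * a 3 * (a 3 + 1)) := by
  obtain ⟨e1, -, e0, f1, g1, -⟩ := h.cast_eqs
  obtain ⟨p1, p2, p3⟩ := h.cast_pos
  simp only [stdSeq, e0, e1, f1, g1]
  have : (2 : ℝ) * a 3 + 2 ≠ 0 := by positivity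
  field_simp
  ring

theorem stdSeq_three (h : ShillaParams b c a) (θ : ℝ) : b 2 * stdSeq b c a θ 3 =
    (θ - (3 * a 3 - b 2 - c 2)) * stdSeq b c a θ 2 - c 2 * stdSeq b c a θ 1 := by
  obtain ⟨-, e2, -, -, -, -⟩ := h.cast_eqs
  obtain ⟨p1, p2, p3⟩ := h.cast_pos
  simp only [stdSeq, e2]
  field_simp

theorem stdSeq_theta_one (h : ShillaParams b c a) : stdSeq b c a (a 3) 1 = 1 / 3 ∧
    stdSeq b c a (a 3) 2 = 0 ∧ stdSeq b c a (a 3) 3 = - c 2 / (3 * b 2) := by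
  obtain ⟨p1, p2, p3⟩ := h.cast_pos
  have e1 : stdSeq b c a (a 3) 1 = 1 / 3 := by rw [h.stdSeq_one]; field_simp
  have e2 : stdSeq b c a (a 3) 2 = 0 := by rw [h.stdSeq_two]; simp
  have e3 := h.stdSeq_three (a 3)
  rw [e1, e2] at e3
  refine ⟨e1, e2, ?_⟩
  field_simp
  linarith

end ShillaParams

namespace IsShilla

variable {V : Type*} [Fintype V] [DecidableEq V] {G : SimpleGraph V} [DecidableRel G.Adj]
  {b c a : ℕ → ℕ}

theorem stdSeq_three_eq (hG : IsShilla G b c a) (h : ShillaParams b c a) {θ : ℝ}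
    (hθ : IsEig G θ) (hθa : θ ≠ a 3) : stdSeq b c a θ 3 = (θ + 3) / (3 * (a 3 + 1)) := by
  obtain ⟨-, -, -, -, -, e3⟩ := h.cast_eqs
  obtain ⟨p1, p2, p3⟩ := h.cast_pos
  have hlast := hG.drg.stdSeq_last hθ
  rw [h.stdSeq_two, e3] at hlast
  have hne : θ - a 3 ≠ 0 := sub_ne_zero.2 hθa
  apply mul_left_cancel₀ hne
  have : (θ - a 3) * stdSeq b c a θ 3
      = 2 * a 3 * ((θ - a 3) * (θ + 3) / (6 * a 3 * (a 3 + 1))) := by linarith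
  rw [this]
  field_simp
  ring

theorem quadratic (hG : IsShilla G b c a) (h : ShillaParams b c a) {θ : ℝ}
    (hθ : IsEig G θ) (hθa : θ ≠ a 3) (hθk : θ ≠ b 0) :
    θ ^ 2 + (3 - a 3 + b 2 + c 2) * θ + 3 * b 2 + c 2 - 3 * a 3 = 0 := by
  obtain ⟨-, -, e0, -, -, -⟩ := h.cast_eqs
  obtain ⟨p1, p2, p3⟩ := h.cast_pos
  have e3 := h.stdSeq_three θ
  rw [hG.stdSeq_three_eq h hθ hθa, h.stdSeq_two, h.stdSeq_one] at e3
  field_simp at e3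
  rw [e0] at hθk
  apply mul_left_cancel₀ (sub_ne_zero.2 hθk)
  linear_combination -e3 / 3

theorem eigMult_theta_one (hG : IsShilla G b c a) (h : ShillaParams b c a) :
    eigMult G (a 3) * (1 + a 3 / 3 + (a 3 + 1) * c 2 / (3 * b 2)) = (Fintype.card V : ℝ) := by
  obtain ⟨-, -, e0, -, -, -⟩ := h.cast_eqs
  obtain ⟨p1, p2, p3⟩ := h.cast_pos
  obtain ⟨u1, u2, u3⟩ := h.stdSeq_theta_one
  rw [← hG.drg.eigMult_mul_cosNorm hG.second.1]
  congr 1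
  simp only [cosNorm, Finset.sum_range_succ, Finset.range_zero, Finset.sum_empty, u1, u2, u3,
    h.kdist_three]
  simp only [stdSeq, kdist, e0]
  field_simp
  ring

theorem card_eq (hG : IsShilla G b c a) (h : ShillaParams b c a) : (Fintype.card V : ℝ)
    = 1 + 3 * a 3 + 6 * a 3 * (a 3 + 1) / c 2 + 3 * (a 3 + 1) * b 2 / c 2 := by
  obtain ⟨-, -, e0, -, -, -⟩ := h.cast_eqs
  obtain ⟨x, -⟩ := hG.drg.exists_diam
  have := hG.drg.sum_dist (fun _ => 1) x
  simp only [Finset.sum_range_succ, Finset.range_zero, Finset.sum_empty, h.kdist_three,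
    h.kdist_two] at this
  simp only [Finset.sum_const, Finset.card_univ, nsmul_eq_mul, mul_one, kdist, e0] at this
  linarith

theorem exists_card_two (hG : IsShilla G b c a) (h : ShillaParams b c a) :
    ∃ k2 : ℕ, k2 * c 2 = 6 * a 3 * (a 3 + 1) := by
  obtain ⟨p1, p2, p3⟩ := h.cast_pos
  obtain ⟨x, -⟩ := hG.drg.exists_diam
  have := hG.drg.kdist_eq x (i := 2) (by norm_num)
  rw [h.kdist_two, eq_div_iff p3.ne'] at this
  exact ⟨_, by exact_mod_cast this⟩

theorem krein_bound (hG : IsShilla G b c a) (h : ShillaParams b c a) :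
    ((a 3 : ℝ) + 1) * c 2 ^ 2 ≤ (a 3 + 9) * b 2 ^ 2 := by
  obtain ⟨-, -, e0, -, -, -⟩ := h.cast_eqs
  obtain ⟨p1, p2, p3⟩ := h.cast_pos
  obtain ⟨u1, u2, u3⟩ := h.stdSeq_theta_one
  have e := hG.second.1
  have := hG.drg.kreinSum_nonneg e e e
  simp only [kreinSum, Finset.sum_range_succ, Finset.range_zero, Finset.sum_empty, u1, u2, u3,
    h.kdist_two, h.kdist_three] at this
  simp only [stdSeq, kdist, e0] at this
  have key : ((a 3 : ℝ) + 9) * b 2 ^ 2 - (a 3 + 1) * c 2 ^ 2 = 9 * b 2 ^ 2 *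
    (0 + 1 * (1 * 1 * 1) + 3 * a 3 * (1 / 3 * (1 / 3) * (1 / 3))
      + 6 * a 3 * (a 3 + 1) / c 2 * (0 * 0 * 0)
      + 3 * (a 3 + 1) * b 2 / c 2 *
        (-c 2 / (3 * b 2) * (-c 2 / (3 * b 2)) * (-c 2 / (3 * b 2)))) := by
    field_simp
    ring
  have : 0 ≤ ((a 3 : ℝ) + 9) * b 2 ^ 2 - (a 3 + 1) * c 2 ^ 2 := by
    rw [key]
    exact mul_nonneg (by positivity) this
  linarith

theorem kreinSum_eq_zero_of_krein11 (hG : IsShilla G b c a) {θ : ℝ}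
    (hQ : krein11 (Fintype.card V) (eigMult G (a 3)) b c a (a 3) θ = 0) :
    kreinSum b c a (a 3) (a 3) θ = 0 := by
  have hm := hG.drg.eigMult_mul_cosNorm hG.second.1
  obtain ⟨x, -⟩ := hG.drg.exists_diam
  have hn : (Fintype.card V : ℝ) ≠ 0 := by
    have : Nonempty V := ⟨x⟩
    exact_mod_cast Fintype.card_ne_zero
  have hm0 : (eigMult G (a 3) : ℝ) ≠ 0 := by
    intro h0
    rw [h0, zero_mul] at hm
    exact hn hm.symm
  rw [krein11, mul_eq_zero] at hQ
  rcases hQ with hQ | hQ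
  · exact absurd hQ (by positivity)
  · rw [← hQ, kreinSum]
    exact Finset.sum_congr rfl fun l _ => by ring

theorem krein_relation (hG : IsShilla G b c a) (h : ShillaParams b c a) {θ : ℝ}
    (hθ : IsEig G θ) (hθa : θ ≠ a 3) (hK : kreinSum b c a (a 3) (a 3) θ = 0) :
    (9 + θ) * b 2 + c 2 * (θ + 3) = 0 := by
  obtain ⟨-, -, e0, -, -, -⟩ := h.cast_eqs
  obtain ⟨p1, p2, p3⟩ := h.cast_pos
  obtain ⟨u1, u2, u3⟩ := h.stdSeq_theta_one
  simp only [kreinSum, Finset.sum_range_succ, Finset.range_zero, Finset.sum_empty, u1, u2, u3,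
    h.kdist_two, h.kdist_three, hG.stdSeq_three_eq h hθ hθa, h.stdSeq_one, h.stdSeq_two] at hK
  simp only [stdSeq, kdist, e0] at hK
  field_simp at hK
  apply mul_left_cancel₀ p3.ne'
  linear_combination hK

end IsShilla

theorem exists_nat_root {A B C : ℕ} {t : ℝ} (hB : 0 < B) (hC : 0 < C)
    (h1 : t * (B + C) = 6 * B) (h2 : t ^ 2 + (A + 3) * t = 6 * B + 2 * C) :
    ∃ r : ℕ, t = r ∧ 0 < r ∧ r < 6 ∧ r * (B + C) = 6 * B ∧
      r ^ 2 + (A + 3) * r = 6 * B + 2 * C := by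
  have hsq : (12 * B + (A + 3) * (B + C)) ^ 2
      = ((A + 3) ^ 2 + 4 * (6 * B + 2 * C)) * (B + C) ^ 2 := by
    have : ((12 * B + (A + 3) * (B + C) : ℝ)) ^ 2
        = ((A + 3) ^ 2 + 4 * (6 * B + 2 * C)) * (B + C) ^ 2 := by
      rw [← h2, show (12 * B : ℝ) = 2 * (t * (B + C)) by rw [h1]; ring]
      ring
    exact_mod_cast this
  have hdvd : B + C ∣ 12 * B + (A + 3) * (B + C) :=
    (Nat.pow_dvd_pow_iff two_ne_zero).1 (hsq ▸ Dvd.intro_left _ rfl)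
  obtain ⟨e, he⟩ := (Nat.dvd_add_left (Dvd.intro_left _ rfl)).1 hdvd
  have hBC : (0 : ℝ) < B + C := by positivity
  have het : (e : ℝ) = 2 * t := by
    apply mul_right_cancel₀ hBC.ne'
    have : (12 * B : ℝ) = (B + C) * e := by exact_mod_cast he
    linarith
  have hquad : e ^ 2 + 2 * (A + 3) * e = 4 * (6 * B + 2 * C) := by
    have : (e : ℝ) ^ 2 + 2 * (A + 3) * e = 4 * (6 * B + 2 * C) := by
      rw [← h2, het]; ring
    exact_mod_cast this
  have heven : Even e := by
    have : Even (e ^ 2) := by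
      rw [Nat.even_iff]
      have : e ^ 2 + 2 * ((A + 3) * e) = 4 * (6 * B + 2 * C) := by rw [← hquad]; ring
      omega
    exact (Nat.even_pow.1 this).1
  obtain ⟨r, rfl⟩ := heven
  have htr : t = r := by push_cast at het; linarith
  subst htr
  have h1' : r * (B + C) = 6 * B := by exact_mod_cast h1
  refine ⟨r, rfl, ?_, ?_, h1', by exact_mod_cast h2⟩
  · rcases Nat.eq_zero_or_pos r with rfl | h
    · omega
    · exact h
  · by_contra! hr
    have := Nat.mul_le_mul_right (B + C) hr
    omega

/-- The feasible parameters: `θ₃ = -3 - r`, `A = a 3`, `B = b 2`, `C = c 2`, `m` is the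
multiplicity of the second largest eigenvalue and `q` the number of vertices at distance `2`. -/
theorem feasible_params {A B C m q r : ℕ} (hA : 3 ≤ A) (hB : 0 < B) (hC : 0 < C)
    (hK : (A + 1) * C ^ 2 ≤ (A + 9) * B ^ 2)
    (hm : m * C * (3 * B + A * B + (A + 1) * C)
      = 3 * B * (C + 3 * A * C + 6 * A * (A + 1) + 3 * (A + 1) * B))
    (hq : q * C = 6 * A * (A + 1)) (hr0 : 0 < r) (hr6 : r < 6) (h1 : r * (B + C) = 6 * B)
    (h2 : r ^ 2 + (A + 3) * r = 6 * B + 2 * C) :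
    r = 4 ∧ ∃ s ∈ ({2, 3, 6, 9, 18} : Finset ℕ), A + 7 = 7 * s ∧ B = 4 * s ∧ C = 2 * s := by
  interval_cases r
  · obtain rfl : C = 5 * B := by omega
    exfalso
    nlinarith [pow_pos hB 2]
  · obtain rfl : C = 2 * B := by omega
    exfalso
    nlinarith [pow_pos hB 2]
  · exfalso
    obtain ⟨s, rfl⟩ : ∃ s, B = 3 * s := ⟨B / 3, by omega⟩
    obtain rfl : C = 3 * s := by omega
    have hA' : (A : ℤ) = 8 * s - 6 := by omega
    zify at hm
    rw [hA'] at hm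
    have hs : (0 : ℤ) < s := by omega
    have : (9 * s * (8 * s - 4) : ℤ) * (2 * (s * m) - 66 * s + 45) = 0 := by
      linear_combination hm
    rcases mul_eq_zero.1 this with h | h
    · have : (0 : ℤ) < 9 * s * (8 * s - 4) := by apply mul_pos <;> omega
      omega
    · omega
  · refine ⟨rfl, ?_⟩
    obtain ⟨s, rfl⟩ : ∃ s, C = 2 * s := ⟨C / 2, by omega⟩
    obtain rfl : B = 4 * s := by omega
    have hA' : (A : ℤ) = 7 * s - 7 := by omega
    zify at hm hq
    rw [hA'] at hm hq
    have hs : (0 : ℤ) < s := by omega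
    have e1 : (s * m : ℤ) = 60 * s - 54 := by
      have : (28 * s * (3 * s - 2) : ℤ) * ((s * m : ℤ) - 60 * s + 54) = 0 := by
        linear_combination hm
      rcases mul_eq_zero.1 this with h | h
      · have : (0 : ℤ) < 28 * s * (3 * s - 2) := by apply mul_pos <;> omega
        omega
      · omega
    have d1 : (s : ℤ) ∣ 54 := ⟨60 - m, by linear_combination e1⟩
    have d2 : (s : ℤ) ∣ 126 := by
      refine ⟨q - 147 * s + 273, ?_⟩
      have : (2 : ℤ) * (s * (q - 147 * s + 273) - 126) = 0 := by linear_combination hq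
      omega
    have d3 : s ∣ 18 := by
      have : (s : ℤ) ∣ 18 := by
        have := dvd_sub d2 (d1.mul_left 2)
        norm_num at this
        exact this
      exact_mod_cast this
    refine ⟨s, ?_, by omega, rfl, rfl⟩
    have : s ∈ Nat.divisors 18 := by simp [d3]
    rw [show Nat.divisors 18 = {1, 2, 3, 6, 9, 18} from rfl] at this
    simp only [Finset.mem_insert, Finset.mem_singleton] at this ⊢
    omega
  · exfalso
    obtain ⟨s, rfl⟩ : ∃ s, C = 5 * s := ⟨C / 5, by omega⟩
    obtain rfl : B = 25 * s := by omega
    have hA' : (A : ℤ) = 32 * s - 8 := by omega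
    zify at hm
    rw [hA'] at hm
    have hs : (0 : ℤ) < s := by omega
    have : (400 * s * (6 * s - 1) : ℤ) * (2 * (s * m) - 282 * s + 63) = 0 := by
      linear_combination hm
    rcases mul_eq_zero.1 this with h | h
    · have : (0 : ℤ) < 400 * s * (6 * s - 1) := by apply mul_pos <;> omega
      omega
    · omega

namespace CoolsaetArray

/-- The intersection array `{21, 16, 8; 1, 4, 14}`. -/
structure IsCoolsaet (b c a : ℕ → ℕ) : Prop where
  b_zero : b 0 = 21
  b_one : b 1 = 16
  b_two : b 2 = 8
  c_one_s17 : c 1 = 1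
  c_two : c 2 = 4
  c_three : c 3 = 14
  a_one : a 1 = 4
  a_two : a 2 = 9
  a_three : a 3 = 7

theorem triple_value {u v : ℕ → ℝ} (u0 : u 0 = 1) (u1 : u 1 = 1 / 3) (u2 : u 2 = 0)
    (u3 : u 3 = -1 / 6) (v0 : v 0 = 1) (v1 : v 1 = -1 / 3) (v2 : v 2 = 1 / 6)
    (v3 : v 3 = -1 / 6) {p q r e : ℕ} (hp : p ≤ 3) (hq : q ≤ 3) (hr : r ≤ 3) (hpq : p ≤ q + 1)
    (hqp : q ≤ p + 1) (hpr : p ≤ r + 1) (hrp : r ≤ p + 1) (hq0 : q = 0 → p = 1 ∧ r = e)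
    (hr0 : r = 0 → p = 1) (hp0 : p = 0 → q = 1 ∧ r = 1) :
    u p * u q * v r = -1 / 9 * (if p = 0 then 1 else 0) + v e / 3 * (if q = 0 then 1 else 0)
      + 1 / 54 * (if q = 1 ∧ p = 1 then 1 else 0) + 5 / 54 * (if q = 1 ∧ r = 0 then 1 else 0)
      - 1 / 18 * (if p = 1 ∧ q = 1 ∧ r = 1 then 1 else 0)
      + 1 / 216 * (if p = 3 ∧ q = 3 then 1 else 0)
      - 1 / 108 * (if p = 3 ∧ q = 3 ∧ r = 3 then 1 else 0) := by
  by_cases h0 : q = 0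
  · obtain ⟨rfl, rfl⟩ := hq0 h0
    subst h0
    norm_num [u0, u1]
    ring
  interval_cases p <;> interval_cases q <;> interval_cases r <;>
    first
    | omega
    | norm_num [u0, u1, u2, u3, v0, v1, v2, v3]

theorem card_filter_subtype {V : Type*} [Fintype V] {p q : V → Prop}
    [DecidablePred p] [DecidablePred q] :
    #{z : {z // p z} | q z.1} = #{z | p z ∧ q z} := by
  rw [← Finset.card_map (Function.Embedding.subtype p)]
  congr 1
  ext z
  simp [and_comm]

variable {V : Type*} [Fintype V] [DecidableEq V] {G : SimpleGraph V} [DecidableRel G.Adj]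
  {b c a : ℕ → ℕ}

theorem stdSeq_seven (ha : IsCoolsaet b c a) : stdSeq b c a 7 1 = 1 / 3 ∧
    stdSeq b c a 7 2 = 0 ∧ stdSeq b c a 7 3 = -1 / 6 := by
  simp only [stdSeq, ha.b_zero, ha.b_one, ha.b_two, ha.c_one_s17, ha.c_two, ha.a_one, ha.a_two]
  norm_num

theorem stdSeq_neg_seven (ha : IsCoolsaet b c a) : stdSeq b c a (-7) 1 = -1 / 3 ∧
    stdSeq b c a (-7) 2 = 1 / 6 ∧ stdSeq b c a (-7) 3 = -1 / 6 := by
  simp only [stdSeq, ha.b_zero, ha.b_one, ha.b_two, ha.c_one_s17, ha.c_two, ha.a_one, ha.a_two]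
  norm_num

theorem kreinSum_eq_zero (ha : IsCoolsaet b c a) : kreinSum b c a 7 7 (-7) = 0 := by
  obtain ⟨u1, u2, u3⟩ := stdSeq_seven ha
  obtain ⟨v1, v2, v3⟩ := stdSeq_neg_seven ha
  simp only [kreinSum, Finset.sum_range_succ, Finset.range_zero, Finset.sum_empty, u1, u2, u3,
    v1, v2, v3]
  simp only [stdSeq, kdist, ha.b_zero, ha.b_one, ha.b_two, ha.c_two, ha.c_three]
  norm_num

theorem triple_count (h : IsDRG G 3 b c a) (ha : IsCoolsaet b c a) (h7 : IsEig G 7)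
    (hn7 : IsEig G (-7)) {x y w : V} (hxy : G.Adj x y) (hxw : G.Adj x w) :
    -1 / 9 + stdSeq b c a (-7) (G.dist w y) / 3 + 4 / 54
      + 5 / 54 * (if G.Adj y w then 1 else 0)
      - 1 / 18 * (#{z | G.dist x z = 1 ∧ G.dist y z = 1 ∧ G.dist w z = 1} : ℝ)
      + 1 / 216 * (#{z | G.dist x z = 3 ∧ G.dist y z = 3} : ℝ)
      - 1 / 108 * (#{z | G.dist x z = 3 ∧ G.dist y z = 3 ∧ G.dist w z = 3} : ℝ) = 0 := by
  have hsum := h.sum_triple_eq_zero h7 h7 hn7 (kreinSum_eq_zero ha) x y w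
  obtain ⟨u1, u2, u3⟩ := stdSeq_seven ha
  obtain ⟨v1, v2, v3⟩ := stdSeq_neg_seven ha
  have hxy' := dist_eq_one_iff_adj.2 hxy
  have hxw' := dist_eq_one_iff_adj.2 hxw
  have hconn := h.connected
  rw [Finset.sum_congr rfl fun z _ => triple_value (e := G.dist w y) rfl u1 u2 u3 rfl v1 v2 v3
    (h.le_diam x z) (h.le_diam y z) (h.le_diam w z)
    (by have := hconn.dist_triangle (u := x) (v := y) (w := z); omega)
    (by have := hconn.dist_triangle (u := y) (v := x) (w := z); rw [G.dist_comm] at hxy'; omega)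
    (by have := hconn.dist_triangle (u := x) (v := w) (w := z); omega)
    (by have := hconn.dist_triangle (u := w) (v := x) (w := z); rw [G.dist_comm] at hxw'; omega)
    (by rw [hconn.dist_eq_zero_iff]; rintro rfl; exact ⟨hxy', rfl⟩)
    (by rw [hconn.dist_eq_zero_iff]; rintro rfl; exact hxw')
    (by
      rw [hconn.dist_eq_zero_iff]; rintro rfl
      exact ⟨by rwa [G.dist_comm], by rwa [G.dist_comm]⟩)] at hsum
  simp only [Finset.sum_add_distrib, Finset.sum_sub_distrib, ← Finset.mul_sum,
    Finset.sum_boole] at hsum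
  have c1 : #{z | G.dist x z = 0} = 1 := by
    rw [Finset.card_eq_one]
    exact ⟨x, by ext z; simp [hconn.dist_eq_zero_iff, eq_comm]⟩
  have c2 : #{z | G.dist y z = 0} = 1 := by
    rw [Finset.card_eq_one]
    exact ⟨y, by ext z; simp [hconn.dist_eq_zero_iff, eq_comm]⟩
  have c3 : #{z | G.dist y z = 1 ∧ G.dist x z = 1} = 4 := by
    have := h.card_nbr x y 1
    rw [hxy'] at this
    simp only [dist_eq_one_iff_adj] at this ⊢
    rw [this]
    simp [nbrCount, ha.a_one]
  have c4 : (#{z | G.dist y z = 1 ∧ G.dist w z = 0} : ℝ) = if G.Adj y w then 1 else 0 := by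
    have : ({z | G.dist y z = 1 ∧ G.dist w z = 0} : Finset V)
        = if G.Adj y w then {w} else ∅ := by
      ext z
      simp only [Finset.mem_filter, Finset.mem_univ, true_and, hconn.dist_eq_zero_iff,
        dist_eq_one_iff_adj]
      split_ifs with hyw
      · simp only [Finset.mem_singleton]
        exact ⟨fun hz => hz.2.symm, by rintro rfl; exact ⟨hyw, rfl⟩⟩
      · simp only [Finset.notMem_empty, iff_false]
        rintro ⟨hz, rfl⟩
        exact hyw hz
    rw [this]
    split_ifs <;> simp
  rw [c1, c2, c3, c4] at hsum
  push_cast at hsum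
  linarith

theorem card_dist_three (h : IsDRG G 3 b c a) (ha : IsCoolsaet b c a) (h7 : IsEig G 7)
    (hn7 : IsEig G (-7)) {x y : V} (hxy : G.Adj x y) :
    #{z | G.dist x z = 3 ∧ G.dist y z = 3} = 16 := by
  have key := triple_count h ha h7 hn7 hxy hxy
  have hfour : #{z | G.dist x z = 1 ∧ G.dist y z = 1} = 4 := by
    have := h.card_nbr x y 1
    rw [dist_eq_one_iff_adj.2 hxy] at this
    simp only [dist_eq_one_iff_adj, and_comm] at this ⊢
    rw [this]
    simp [nbrCount, ha.a_one]
  simp only [and_self, hfour, dist_self, G.irrefl, if_false, stdSeq] at key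
  have : (#{z | G.dist x z = 3 ∧ G.dist y z = 3} : ℝ) = 16 := by
    push_cast at key
    linarith
  exact_mod_cast this

theorem isLocalSystem (h : IsDRG G 3 b c a) (ha : IsCoolsaet b c a) (h7 : IsEig G 7)
    (hn7 : IsEig G (-7)) (x : V) :
    IsLocalSystem (G.comap (Subtype.val : {y // G.Adj x y} → V))
      fun y => ({z : {z // G.dist x z = 3} | G.dist y z = 3} : Finset _) := by
  obtain ⟨v1, v2, -⟩ := stdSeq_neg_seven ha
  have hone : ∀ y, (G.dist x y = 1 ↔ G.Adj x y) := fun y => dist_eq_one_iff_adj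
  have hcommon : ∀ y w : {y // G.Adj x y},
      #{u : {y // G.Adj x y} | G.Adj y u ∧ G.Adj w u}
        = #{z | G.dist x z = 1 ∧ G.dist y z = 1 ∧ G.dist w z = 1} := by
    intro y w
    rw [card_filter_subtype (q := fun u => G.Adj y u ∧ G.Adj w u)]
    simp only [dist_eq_one_iff_adj]
  have hinter : ∀ y w : {y // G.Adj x y},
      #(({z : {z // G.dist x z = 3} | G.dist y z = 3} : Finset _)
        ∩ ({z : {z // G.dist x z = 3} | G.dist w z = 3} : Finset _))
        = #{z | G.dist x z = 3 ∧ G.dist y z = 3 ∧ G.dist w z = 3} := by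
    intro y w
    rw [← Finset.filter_and,
      card_filter_subtype (q := fun z => G.dist y z = 3 ∧ G.dist w z = 3)]
  have hN : ∀ y : {y // G.Adj x y}, (#{z | G.dist x z = 3 ∧ G.dist y z = 3} : ℝ) = 16 := by
    intro y
    rw [card_dist_three h ha h7 hn7 y.2]
    norm_num
  constructor
  · rw [Fintype.card_subtype, ← neighborFinset_eq_filter, card_neighborFinset_eq_degree,
      h.degree_eq, ha.b_zero]
  · intro y
    rw [← card_neighborFinset_eq_degree, neighborFinset_eq_filter]
    simp only [comap_adj]
    rw [card_filter_subtype (q := fun u => G.Adj y u)]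
    have := h.card_nbr x y 1
    rw [dist_eq_one_iff_adj.2 y.2] at this
    simp only [dist_eq_one_iff_adj, and_comm] at this ⊢
    rw [this]
    simp [nbrCount, ha.a_one]
  · intro y
    rw [card_filter_subtype (q := fun z => G.dist y z = 3)]
    exact card_dist_three h ha h7 hn7 y.2
  · intro y w hyw
    have key := triple_count h ha h7 hn7 y.2 w.2
    rw [comap_adj] at hyw
    simp only [comap_adj]
    rw [hinter, hcommon]
    rw [hN, if_pos hyw, dist_eq_one_iff_adj.2 hyw.symm, v1] at key
    have : (#{z | G.dist x z = 3 ∧ G.dist y z = 3 ∧ G.dist w z = 3} : ℝ)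
        + 6 * #{z | G.dist x z = 1 ∧ G.dist y z = 1 ∧ G.dist w z = 1} = 2 := by linarith
    exact_mod_cast this
  · intro y w hne hyw
    have key := triple_count h ha h7 hn7 y.2 w.2
    rw [comap_adj] at hyw
    simp only [comap_adj]
    rw [hinter, hcommon]
    have hd : G.dist w.1 y.1 = 2 := by
      have h1 := h.connected.dist_triangle (u := w.1) (v := x) (w := y.1)
      rw [dist_eq_one_iff_adj.2 w.2.symm, dist_eq_one_iff_adj.2 y.2] at h1
      have h2 : G.dist w.1 y.1 ≠ 0 := by
        rw [Ne, h.connected.dist_eq_zero_iff]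
        exact fun e => hne (Subtype.ext e.symm)
      have h3 : G.dist w.1 y.1 ≠ 1 := by
        rw [Ne, dist_eq_one_iff_adj]
        exact fun e => hyw e.symm
      omega
    rw [hN, if_neg hyw, hd, v2] at key
    have : (#{z | G.dist x z = 3 ∧ G.dist y z = 3 ∧ G.dist w z = 3} : ℝ)
        + 6 * #{z | G.dist x z = 1 ∧ G.dist y z = 1 ∧ G.dist w z = 1} = 10 := by linarith
    exact_mod_cast this
  · intro z
    simp only [Finset.mem_filter, Finset.mem_univ, true_and]
    rw [card_filter_subtype (q := fun y => G.dist y z = 3)]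
    have := h.card_nbr z x 3
    rw [G.dist_comm, z.2] at this
    simp only [G.dist_comm (u := z.1)] at this
    rw [this]
    simp [nbrCount, ha.a_three]

theorem false_of_isEig (h : IsDRG G 3 b c a) (ha : IsCoolsaet b c a) (h7 : IsEig G 7)
    (hn7 : IsEig G (-7)) : False := by
  obtain ⟨x, -⟩ := h.exists_diam
  exact (isLocalSystem h ha h7 hn7 x).false

end CoolsaetArray

theorem IsShilla.eigMult_eq {V : Type*} [Fintype V] [DecidableEq V] {G : SimpleGraph V}
    [DecidableRel G.Adj] {b c a : ℕ → ℕ} (hG : IsShilla G b c a) (h : ShillaParams b c a) {θ : ℝ}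
    (hθ : IsEig G θ) (hθa : θ ≠ a 3) :
    eigMult G θ * (1 + θ ^ 2 / (3 * a 3) + (θ - a 3) ^ 2 * (θ + 3) ^ 2 /
      (6 * a 3 * (a 3 + 1) * c 2) + (θ + 3) ^ 2 * b 2 / (3 * (a 3 + 1) * c 2))
      = (Fintype.card V : ℝ) := by
  obtain ⟨-, -, e0, -, -, -⟩ := h.cast_eqs
  obtain ⟨p1, p2, p3⟩ := h.cast_pos
  rw [← hG.drg.eigMult_mul_cosNorm hθ]
  congr 1
  simp only [cosNorm, Finset.sum_range_succ, Finset.range_zero, Finset.sum_empty,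
    h.kdist_two, h.kdist_three, hG.stdSeq_three_eq h hθ hθa, h.stdSeq_one, h.stdSeq_two]
  simp only [stdSeq, kdist, e0]
  field_simp
  ring

theorem IsShilla.exists_feasible {V : Type*} [Fintype V] [DecidableEq V] {G : SimpleGraph V}
    [DecidableRel G.Adj] {b c a : ℕ → ℕ} (hG : IsShilla G b c a) (h : ShillaParams b c a) {θ : ℝ}
    (hθ : IsEig G θ) (hθa : θ < a 3)
    (hQ : krein11 (Fintype.card V) (eigMult G (a 3)) b c a (a 3) θ = 0) :
    θ = -7 ∧ ∃ s ∈ ({2, 3, 6, 9, 18} : Finset ℕ),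
      a 3 + 7 = 7 * s ∧ b 2 = 4 * s ∧ c 2 = 2 * s := by
  obtain ⟨p1, p2, p3⟩ := h.cast_pos
  have hrel := hG.krein_relation h hθ hθa.ne (hG.kreinSum_eq_zero_of_krein11 hQ)
  have hquad := hG.quadratic h hθ hθa.ne (hθa.trans hG.second.2.1).ne
  obtain ⟨r, hr, hr0, hr6, hr1, hr2⟩ := exists_nat_root (A := a 3) (t := -3 - θ) h.b_two_pos
    h.c_two_pos (by linear_combination -hrel) (by linear_combination hquad - hrel)
  obtain ⟨q, hq⟩ := hG.exists_card_two h
  have hm : (eigMult G (a 3) * c 2 * (3 * b 2 + a 3 * b 2 + (a 3 + 1) * c 2) : ℝ)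
      = 3 * b 2 * (c 2 + 3 * a 3 * c 2 + 6 * a 3 * (a 3 + 1) + 3 * (a 3 + 1) * b 2) := by
    have := (hG.eigMult_theta_one h).trans (hG.card_eq h)
    field_simp at this
    linear_combination this
  obtain ⟨rfl, hs⟩ := feasible_params h.three_le h.b_two_pos h.c_two_pos
    (by exact_mod_cast hG.krein_bound h) (by exact_mod_cast hm) hq hr0 hr6 hr1 hr2
  exact ⟨by push_cast at hr; linarith, hs⟩

/-- The intersection array when `θ` and `η` are two eigenvalues below `θ₁` and the Krein
parameter of `(θ₁, θ₁, θ)` vanishes. -/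
theorem IsShilla.array_eq {V : Type*} [Fintype V] [DecidableEq V] {G : SimpleGraph V}
    [DecidableRel G.Adj] {b c a : ℕ → ℕ} (hG : IsShilla G b c a) (h : ShillaParams b c a)
    {θ η : ℝ} (hθ : IsEig G θ) (hη : IsEig G η) (hθa : θ < a 3) (hηa : η < a 3) (hne : θ ≠ η)
    (hQ : krein11 (Fintype.card V) (eigMult G (a 3)) b c a (a 3) θ = 0) :
    (b 0 = 42 ∧ b 1 = 30 ∧ b 2 = 12 ∧ c 1 = 1 ∧ c 2 = 6 ∧ c 3 = 28) ∨
    (b 0 = 105 ∧ b 1 = 72 ∧ b 2 = 24 ∧ c 1 = 1 ∧ c 2 = 12 ∧ c 3 = 70) := by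
  obtain ⟨rfl, s, hs, hA, hB, hC⟩ := hG.exists_feasible h hθ hθa hQ
  have q1 := hG.quadratic h hθ hθa.ne (hθa.trans hG.second.2.1).ne
  have q2 := hG.quadratic h hη hηa.ne (hηa.trans hG.second.2.1).ne
  have hη' : η = a 3 - b 2 - c 2 + 4 := by
    apply mul_left_cancel₀ (sub_ne_zero.2 hne)
    linear_combination q1 - q2
  have hmη := (hG.eigMult_eq h hη hηa.ne).trans (hG.card_eq h)
  rw [hη'] at hmη
  have f1 := h.a_one
  have f2 := h.a_two
  have f3 := h.b_zero
  have f4 := h.b_one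
  have f5 := h.c_one_s17
  have f6 := h.c_three
  simp only [Finset.mem_insert, Finset.mem_singleton] at hs
  rcases hs with rfl | rfl | rfl | rfl | rfl
  · have hA' : a 3 = 7 := by omega
    have ha : CoolsaetArray.IsCoolsaet b c a := by constructor <;> omega
    have h7 := hG.second.1
    rw [hA'] at h7
    exact (CoolsaetArray.false_of_isEig hG.drg ha (by exact_mod_cast h7) hθ).elim
  · left; omega
  · right; omega
  · exfalso
    have hA' : a 3 = 56 := by omega
    rw [hA', hB, hC] at hmη
    norm_num at hmη
    have : (eigMult G (a 3 - b 2 - c 2 + 4) : ℝ) * 13 = 7448 := by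
      rw [hA', hB, hC]
      norm_num
      linarith
    have : eigMult G (a 3 - b 2 - c 2 + 4) * 13 = 7448 := by exact_mod_cast this
    omega
  · exfalso
    have hA' : a 3 = 119 := by omega
    rw [hA', hB, hC] at hmη
    norm_num at hmη
    have : (eigMult G (a 3 - b 2 - c 2 + 4) : ℝ) * 11 = 8330 := by
      rw [hA', hB, hC]
      norm_num
      linarith
    have : eigMult G (a 3 - b 2 - c 2 + 4) * 11 = 8330 := by exact_mod_cast this
    omega

end Shilla

/-- A Shilla distance-regular graph with `b(Γ) = 3` that is `Q`-polynomial with respect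
to `θ₁` has intersection array `{42, 30, 12; 1, 6, 28}` or `{105, 72, 24; 1, 12, 70}`. -/
theorem stmt17 {V : Type*} [Fintype V] [DecidableEq V] (G : SimpleGraph V)
    [DecidableRel G.Adj] (b c a : ℕ → ℕ) (hG : IsShilla G b c a)
    (hβ : a 3 = a 1 + 3)
    (θ2 θ3 : ℝ) (h2 : IsEig G θ2) (h3 : IsEig G θ3)
    (h32 : θ3 < θ2) (h2a : θ2 < (a 3 : ℝ))
    (hall : ∀ θ : ℝ, IsEig G θ → θ = (b 0 : ℝ) ∨ θ = (a 3 : ℝ) ∨ θ = θ2 ∨ θ = θ3)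
    (n : ℕ) (hn : Fintype.card V = n) (m1 : ℕ) (hm1 : eigMult G ((a 3 : ℝ)) = m1)
    (hQ : IsQPolyTheta1 n m1 b c a ((a 3 : ℝ)) θ2 θ3) :
    (b 0 = 42 ∧ b 1 = 30 ∧ b 2 = 12 ∧ c 1 = 1 ∧ c 2 = 6 ∧ c 3 = 28) ∨
    (b 0 = 105 ∧ b 1 = 72 ∧ b 2 = 24 ∧ c 1 = 1 ∧ c 2 = 12 ∧ c 3 = 70) := by
  have h := hG.params hβ
  subst hn hm1
  rcases hQ with hQ | hQ
  · exact hG.array_eq h h2 h3 h2a (h32.trans h2a) h32.ne' hQ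
  · exact hG.array_eq h h3 h2 (h32.trans h2a) h2a h32.ne hQ
end
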